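/- arXiv:2009.02477 — 4 statements merged into one kernel-verified Lean document; each statement's English description precedes it below -/
import Mathlib

section
/- An element a of a complex unital Banach algebra A has a g-Drazin inverse if and only if there exists an idempotent e commuting with a such that eae is invertible in the corner algebra eAe (with identity e) and (1−e)a(1−e) is quasinilpotent in the corner algebra (1−e)A(1−e) (with identity 1−e). -/
open Filter Finset

/-- An element of a complex (Banach) algebra is quasinilpotent if its spectral radius is zero. -/
noncomputable def Quasinilpotent {A : Type*} [Ring A] [Algebra ℂ A] (q : A) : Prop :=
  spectralRadius ℂ q = 0

/-- `a` has a generalized Drazin inverse: some `b` with `ab = ba`, `b = bab`,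
and `a - a²b` quasinilpotent. -/
noncomputable def HasGDrazin {A : Type*} [Ring A] [Algebra ℂ A] (a : A) : Prop :=
  ∃ b : A, a * b = b * a ∧ b = b * a * b ∧ Quasinilpotent (a - a ^ 2 * b)

theorem quasinilpotent_iff_tendsto {A : Type*} [NormedRing A] [NormedAlgebra ℂ A]
    [CompleteSpace A] (q : A) :
    Quasinilpotent q ↔ Tendsto (fun n : ℕ => ‖q ^ n‖ ^ ((1 : ℝ) / n)) atTop (nhds 0) := by
  have gelfand := spectrum.pow_norm_pow_one_div_tendsto_nhds_spectralRadius q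
  have key : Tendsto (fun n : ℕ => ENNReal.ofReal (‖q ^ n‖ ^ ((1 : ℝ) / n))) atTop (nhds 0) ↔
      Tendsto (fun n : ℕ => ‖q ^ n‖ ^ ((1 : ℝ) / n)) atTop (nhds 0) := by
    constructor
    · intro h
      have h' := (ENNReal.tendsto_toReal ENNReal.zero_ne_top).comp h
      refine h'.congr fun n => ?_
      exact ENNReal.toReal_ofReal (by positivity)
    · intro h
      simpa using ENNReal.tendsto_ofReal h
  rw [← key, Quasinilpotent]
  exact ⟨fun h => h ▸ gelfand, fun h => tendsto_nhds_unique gelfand h⟩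

theorem corner_compl_eq {R : Type*} [Ring R] {a e : R} (he : e * e = e) (hc : a * e = e * a) :
    (1 - e) * a * (1 - e) = a - a * e := by
  rw [sub_mul, one_mul, ← hc, mul_sub, mul_one, sub_mul, mul_assoc, he, sub_self, sub_zero]

theorem stmt8 {A : Type*} [NormedRing A] [NormedAlgebra ℂ A] [CompleteSpace A] (a : A) :
    HasGDrazin a ↔ ∃ e : A, e * e = e ∧ a * e = e * a ∧
      (∃ y : A, y = e * y * e ∧ (e * a * e) * y = e ∧ y * (e * a * e) = e) ∧
      Tendsto (fun n : ℕ => ‖((1 - e) * a * (1 - e)) ^ n‖ ^ ((1 : ℝ) / n)) atTop (nhds 0) := by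
  simp only [← quasinilpotent_iff_tendsto]
  constructor
  · rintro ⟨b, hab, hb, hq⟩
    have he : a * b * (a * b) = a * b := by rw [mul_assoc, ← mul_assoc b, ← hb]
    have hc : a * (a * b) = a * b * a := by rw [mul_assoc, ← hab]
    have heb : a * b * b = b := by rw [hab, ← hb]
    have hbe : b * (a * b) = b := by rw [← mul_assoc, ← hb]
    have hcorner : a * b * a * (a * b) = a * (a * b) := by rw [← hc, mul_assoc, he]
    refine ⟨a * b, he, hc, ⟨b, ?_, ?_, ?_⟩, ?_⟩
    · rw [heb, hbe]
    · rw [hcorner, mul_assoc, heb]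
    · rw [hcorner, ← mul_assoc, ← hab, he]
    · rwa [corner_compl_eq he hc, ← mul_assoc, ← sq]
  · rintro ⟨e, he, hc, ⟨y, hy, hay, hya⟩, hq⟩
    have hey : e * y = y := by rw [hy, ← mul_assoc, ← mul_assoc, he]
    have hye : y * e = y := by rw [hy, mul_assoc, he]
    have hay' : a * y = e := by rwa [← hc, mul_assoc, mul_assoc, hey, hey] at hay
    have hya' : y * a = e := by
      rwa [mul_assoc e, hc, ← mul_assoc, ← mul_assoc, hye, hye] at hya
    refine ⟨y, hay'.trans hya'.symm, by rw [hya', hey], ?_⟩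
    rwa [sq, mul_assoc, hay', ← corner_compl_eq he hc]
end

section
/- Let A be a complex unital Banach algebra and a ∈ A. Then a has a g-Drazin inverse if and only if the 2×2 matrix [[1,1],[a,0]] over A has a g-Drazin inverse in M₂(A). -/
open Filter Finset

open scoped Topology

section Ring

variable {A : Type*} [Ring A] [Algebra ℂ A]

theorem quasinilpotent_iff_isUnit {q : A} :
    Quasinilpotent q ↔ ∀ c : ℂ, c ≠ 0 → IsUnit (algebraMap ℂ A c - q) := by
  simp only [Quasinilpotent, spectralRadius, ENNReal.iSup_eq_zero, spectrum.mem_iff]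
  refine forall_congr' fun c => ?_
  simp only [ENNReal.coe_eq_zero, nnnorm_eq_zero]
  tauto

end Ring

section Banach

variable {A : Type*} [NormedRing A] [NormedAlgebra ℂ A] [CompleteSpace A]

theorem quasinilpotent_iff_norm_pow_le {q : A} :
    Quasinilpotent q ↔ ∀ ε : ℝ, 0 < ε → ∀ᶠ n : ℕ in atTop, ‖q ^ n‖ ≤ ε ^ n := by
  have gelfand := spectrum.pow_norm_pow_one_div_tendsto_nhds_spectralRadius q
  constructor
  · intro hq ε hε
    rw [show spectralRadius ℂ q = 0 from hq] at gelfand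
    filter_upwards [gelfand.eventually_lt_const (ENNReal.ofReal_pos.2 hε), eventually_ne_atTop 0]
      with n hn hn0
    have hle := ((ENNReal.ofReal_lt_ofReal_iff hε).1 hn).le
    calc ‖q ^ n‖ = (‖q ^ n‖ ^ (1 / n : ℝ)) ^ n := by
          rw [one_div, Real.rpow_inv_natCast_pow (norm_nonneg _) hn0]
      _ ≤ ε ^ n := by gcongr
  · intro h
    refine le_antisymm (ENNReal.le_of_forall_pos_le_add fun ε hε _ => ?_) bot_le
    rw [zero_add]
    refine le_of_tendsto gelfand ?_
    filter_upwards [h ε hε, eventually_ne_atTop 0] with n hn hn0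
    rw [← ENNReal.ofReal_coe_nnreal]
    refine ENNReal.ofReal_le_ofReal ?_
    calc ‖q ^ n‖ ^ (1 / n : ℝ) ≤ ((ε : ℝ) ^ n) ^ (1 / n : ℝ) := by gcongr
      _ = ε := by rw [one_div, Real.pow_rpow_inv_natCast ε.coe_nonneg hn0]

theorem Quasinilpotent.mul_left {q x : A} (hq : Quasinilpotent q) (hx : Commute x q) :
    Quasinilpotent (x * q) := by
  rw [quasinilpotent_iff_norm_pow_le] at hq ⊢
  intro ε hε
  have hpos : 0 < ‖x‖ + 1 := by positivity
  filter_upwards [hq (ε / (‖x‖ + 1)) (by positivity), eventually_gt_atTop 0] with n hn hn0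
  calc ‖(x * q) ^ n‖ ≤ ‖x ^ n‖ * ‖q ^ n‖ := by rw [hx.mul_pow]; exact norm_mul_le _ _
    _ ≤ (‖x‖ + 1) ^ n * (ε / (‖x‖ + 1)) ^ n := by
        gcongr
        exact (norm_pow_le' x hn0).trans (by gcongr; linarith)
    _ = ε ^ n := by rw [← mul_pow]; field_simp

theorem Quasinilpotent.neg {q : A} (hq : Quasinilpotent q) : Quasinilpotent (-q) := by
  simpa using hq.mul_left (Commute.neg_one_left q)

theorem Quasinilpotent.isUnit_sub {u q : A} (hq : Quasinilpotent q) (hu : IsUnit u)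
    (h : Commute u q) : IsUnit (u - q) := by
  obtain ⟨u, rfl⟩ := hu
  have hone : IsUnit (1 - (↑u⁻¹ : A) * q) := by
    simpa using quasinilpotent_iff_isUnit.1 (hq.mul_left h.units_inv_left) 1 one_ne_zero
  simpa [mul_sub] using u.isUnit.mul hone

theorem Quasinilpotent.isUnit_add {u q : A} (hq : Quasinilpotent q) (hu : IsUnit u)
    (h : Commute u q) : IsUnit (u + q) := by
  simpa using hq.neg.isUnit_sub hu h.neg_right

theorem Quasinilpotent.add {q r : A} (hq : Quasinilpotent q) (hr : Quasinilpotent r)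
    (h : Commute q r) : Quasinilpotent (q + r) := by
  rw [quasinilpotent_iff_isUnit]
  intro c hc
  rw [← sub_sub]
  exact hr.isUnit_sub (quasinilpotent_iff_isUnit.1 hq c hc)
    ((Algebra.commute_algebraMap_left c r).sub_left h)

theorem Quasinilpotent.eq_zero_of_eq_mul_mul {q x z : A} (hq : Quasinilpotent q)
    (hz : z = x * z * q) : z = 0 := by
  have hiter : ∀ n : ℕ, z = x ^ n * z * q ^ n := by
    intro n
    induction n with
    | zero => simp
    | succ n ih =>
      nth_rewrite 1 [ih, hz]
      simp only [pow_succ x, pow_succ' q, mul_assoc]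
  have hpos : 0 < ‖x‖ + 1 := by positivity
  have hbound : ∀ᶠ n : ℕ in atTop, ‖z‖ ≤ ‖z‖ * (1 / 2) ^ n := by
    filter_upwards [quasinilpotent_iff_norm_pow_le.1 hq (1 / 2 / (‖x‖ + 1)) (by positivity),
      eventually_gt_atTop 0] with n hn hn0
    calc ‖z‖ = ‖x ^ n * z * q ^ n‖ := by rw [← hiter n]
      _ ≤ ‖x ^ n‖ * ‖z‖ * ‖q ^ n‖ := norm_mul₃_le
      _ ≤ (‖x‖ + 1) ^ n * ‖z‖ * (1 / 2 / (‖x‖ + 1)) ^ n := by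
          gcongr
          exact (norm_pow_le' x hn0).trans (by gcongr; linarith)
      _ = ‖z‖ * (1 / 2) ^ n := by rw [div_pow]; field_simp
  have hlim : Tendsto (fun n : ℕ => ‖z‖ * (1 / 2 : ℝ) ^ n) atTop (𝓝 0) := by
    simpa using (tendsto_pow_atTop_nhds_zero_of_lt_one (r := (1 / 2 : ℝ))
      (by norm_num) (by norm_num)).const_mul ‖z‖
  exact norm_le_zero_iff.1 (ge_of_tendsto hlim hbound)

/-- The quadratic equation `s ^ 2 - s = q` with quasinilpotent right-hand side has a quasinilpotent
solution, given by the generating series of the Catalan numbers. -/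
theorem Quasinilpotent.exists_mul_self_sub_eq {q : A} (hq : Quasinilpotent q) :
    ∃ x : A, (∀ y, Commute q y → Commute x y) ∧ Quasinilpotent (q * x) ∧
      q * x * (q * x) - q * x = q := by
  set f : ℕ → A := fun n => (catalan n : ℂ) • (-q) ^ n with hf
  have hcat : ∀ n, (catalan n : ℝ) ≤ 4 ^ n := fun n => by
    rw [catalan_eq_centralBinom_div]
    exact_mod_cast (Nat.div_le_self _ _).trans (Nat.centralBinom_le_four_pow n)
  have hsum : Summable fun n => ‖f n‖ := by
    refine Summable.of_norm_bounded_eventually_nat (g := fun n => (1 / 2 : ℝ) ^ n)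
      (summable_geometric_of_lt_one (by norm_num) (by norm_num)) ?_
    filter_upwards [quasinilpotent_iff_norm_pow_le.1 hq.neg (1 / 8) (by norm_num)] with n hn
    rw [norm_norm, norm_smul, Complex.norm_natCast]
    calc (catalan n : ℝ) * ‖(-q) ^ n‖ ≤ 4 ^ n * (1 / 8) ^ n := by
          gcongr
          exact hcat n
      _ = (1 / 2 : ℝ) ^ n := by rw [← mul_pow]; norm_num
  have hcomm : ∀ y, Commute q y → Commute (∑' n, f n) y := fun y hy =>
    Commute.tsum_left y fun n => ((hy.neg_left).pow_left n).smul_left _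
  have hrec : ∑' n, f n = 1 - q * ((∑' n, f n) * ∑' n, f n) := by
    rw [tsum_mul_tsum_eq_tsum_sum_antidiagonal_of_summable_norm hsum hsum,
      hsum.of_norm.tsum_eq_zero_add, sub_eq_add_neg, ← neg_mul,
      ← (summable_norm_sum_mul_antidiagonal_of_summable_norm hsum hsum).of_norm.tsum_mul_left]
    congr 1
    · simp [hf]
    · refine tsum_congr fun n => ?_
      have hterm : ∀ ij ∈ antidiagonal n,
          f ij.1 * f ij.2 = ((catalan ij.1 * catalan ij.2 : ℕ) : ℂ) • (-q) ^ n := by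
        intro ij hij
        rw [← mem_antidiagonal.1 hij, pow_add]
        simp [hf, smul_smul, mul_comm]
      rw [sum_congr rfl hterm, ← sum_smul, ← Nat.cast_sum, ← catalan_succ', mul_smul_comm,
        ← pow_succ']
  have hqx := hcomm q (Commute.refl q)
  refine ⟨-∑' n, f n, fun y hy => (hcomm y hy).neg_left, ?_, ?_⟩
  · rw [← (hqx.neg_left).eq]
    exact hq.mul_left hqx.neg_left
  · generalize ∑' n, f n = x at *
    calc q * -x * (q * -x) - q * -x = q * (x + q * (x * x)) := by
          rw [show q * -x * (q * -x) = q * ((x * q) * x) by noncomm_ring, hqx.eq]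
          noncomm_ring
      _ = q := by
          nth_rewrite 1 [hrec]
          noncomm_ring

/-- `x` has a generalized Drazin inverse iff it has a spectral idempotent at zero. -/
theorem hasGDrazin_iff_exists_idempotent {x : A} :
    HasGDrazin x ↔ ∃ p : A, p * p = p ∧ Commute p x ∧ Quasinilpotent (x * p) ∧ IsUnit (x + p) := by
  constructor
  · rintro ⟨b, hxb, hb, hq⟩
    have hq' : Quasinilpotent (x * (1 - x * b)) := by
      rwa [mul_sub, mul_one, ← mul_assoc, ← sq]
    have hbp : b * (1 - x * b) = 0 := by rw [mul_sub, mul_one, ← mul_assoc, ← hb, sub_self]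
    have hpb : (1 - x * b) * b = 0 := by rw [sub_mul, one_mul, hxb, ← hb, sub_self]
    have hpx : Commute (1 - x * b) x := by
      refine (Commute.one_left x).sub_left ?_
      rw [commute_iff_eq, mul_assoc, ← hxb]
    have hpp : (1 - x * b) * (1 - x * b) = 1 - x * b := by
      rw [sub_mul (1 : A), one_mul, mul_assoc, hbp, mul_zero, sub_zero]
    refine ⟨1 - x * b, hpp, hpx, hq', ?_⟩
    set p := 1 - x * b with hp
    have hxbp : x * b = 1 - p := by rw [hp]; abel
    have hinv : (x + p - x * p) * (b + p) = 1 := by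
      calc (x + p - x * p) * (b + p)
          = x * b + x * p + p * b + p * p - x * (p * b) - x * (p * p) := by noncomm_ring
        _ = 1 := by rw [hpb, hpp, hxbp]; noncomm_ring
    have hinv' : (b + p) * (x + p - x * p) = 1 := by
      calc (b + p) * (x + p - x * p)
          = b * x + b * p - b * x * p + p * x + p * p - p * x * p := by noncomm_ring
        _ = 1 - p * p + p * p := by
            rw [hbp, ← hxb, hxbp, hpx.eq, mul_assoc x, hpp]; noncomm_ring [hpp]
        _ = 1 := by abel
    have hunit : IsUnit (x + p - x * p) := ⟨⟨_, _, hinv, hinv'⟩, rfl⟩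
    have hcomm : Commute (x + p - x * p) (x * p) :=
      (((Commute.refl x).mul_right hpx.symm).add_left
        (hpx.mul_right (Commute.refl p))).sub_left (Commute.refl _)
    simpa using hq'.isUnit_add hunit hcomm
  · rintro ⟨p, hpp, hpx, hq, ⟨u, hu⟩⟩
    have hup : Commute (↑u⁻¹ : A) p := by
      refine Commute.units_inv_left ?_
      rw [hu]
      exact hpx.symm.add_left (Commute.refl p)
    have hux : Commute (↑u⁻¹ : A) x := by
      refine Commute.units_inv_left ?_
      rw [hu]
      exact (Commute.refl x).add_left hpx
    have hxp : x * (1 - p) = u * (1 - p) := by rw [hu, add_mul, mul_sub p, hpp]; simp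
    have hpp' : (1 - p) * (1 - p) = 1 - p := by simp [mul_sub, sub_mul, hpp]
    have hxb : x * (↑u⁻¹ * (1 - p)) = 1 - p := by
      rw [← mul_assoc, ← hux.eq, mul_assoc, hxp, Units.inv_mul_cancel_left]
    have hbx : ↑u⁻¹ * (1 - p) * x = 1 - p := by
      rw [mul_assoc, ((Commute.one_left x).sub_left hpx).eq, hxp, Units.inv_mul_cancel_left]
    refine ⟨↑u⁻¹ * (1 - p), hxb.trans hbx.symm, ?_, ?_⟩
    · rw [hbx, ← mul_assoc, ((Commute.one_right _).sub_right hup).symm.eq, mul_assoc, hpp']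
    · rw [sq, mul_assoc, hxb, mul_sub, mul_one, sub_sub_cancel]
      exact hq


theorem spectral_idempotent_identities {R : Type*} [CommRing R] {m p s v : R} (hp : p * p = p)
    (hs : s * s - s = (m * m - m) * p) (hsp : s * p = s) (hv : (1 - 2 * s) * v = 1) :
    (p * (1 - s - m) * v) * (p * (1 - s - m) * v) = p * (1 - s - m) * v ∧
    m * (p * (1 - s - m) * v) = s * (p * (1 - s - m) * v) ∧
    (m + p * (1 - s - m) * v) * ((m - 1) * (1 - p) + p) =
      m * m - m + p - s * (s - 1 + p - 2 * (p * (1 - s - m) * v)) := by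
  refine ⟨?_, ?_, ?_⟩ <;> grind

open scoped IsMulCommutative in
theorem spectral_idempotent_identities_of_commute {R : Type*} [Ring R] {m p s v : R}
    (hmp : Commute m p) (hms : Commute m s) (hmv : Commute m v) (hps : Commute p s)
    (hpv : Commute p v) (hsv : Commute s v) (hp : p * p = p)
    (hs : s * s - s = (m * m - m) * p) (hsp : s * p = s) (hv : (1 - 2 * s) * v = 1) :
    (p * (1 - s - m) * v) * (p * (1 - s - m) * v) = p * (1 - s - m) * v ∧
    m * (p * (1 - s - m) * v) = s * (p * (1 - s - m) * v) ∧
    (m + p * (1 - s - m) * v) * ((m - 1) * (1 - p) + p) =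
      m * m - m + p - s * (s - 1 + p - 2 * (p * (1 - s - m) * v)) := by
  have hcomm : ∀ x ∈ ({m, p, s, v} : Set R), ∀ y ∈ ({m, p, s, v} : Set R), x * y = y * x := by
    simp only [Set.mem_insert_iff, Set.mem_singleton_iff, forall_eq_or_imp, forall_eq, hmp.eq,
      hms.eq, hmv.eq, hps.eq, hpv.eq, hsv.eq, and_self]
  have := Subring.isMulCommutative_closure hcomm
  have hmem : ∀ x ∈ ({m, p, s, v} : Set R), x ∈ Subring.closure {m, p, s, v} :=
    fun x hx => Subring.subset_closure hx
  have key := spectral_idempotent_identities (R := Subring.closure {m, p, s, v})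
    (m := ⟨m, hmem m (by simp)⟩) (p := ⟨p, hmem p (by simp)⟩) (s := ⟨s, hmem s (by simp)⟩)
    (v := ⟨v, hmem v (by simp)⟩) (Subtype.ext hp) (Subtype.ext hs) (Subtype.ext hsp)
    (Subtype.ext hv)
  exact key.imp (congrArg Subtype.val) (And.imp (congrArg Subtype.val) (congrArg Subtype.val))

theorem hasGDrazin_of_mul_self_sub {m p : A} (hpp : p * p = p) (hpm : Commute p m)
    (hq : Quasinilpotent ((m * m - m) * p)) (hu : IsUnit (m * m - m + p)) : HasGDrazin m := by
  obtain ⟨x, hx, hs, hsq⟩ := hq.exists_mul_self_sub_eq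
  set q := (m * m - m) * p with hqdef
  set s := q * x with hsdef
  have hqm : Commute q m :=
    (((Commute.refl m).mul_left (Commute.refl m)).sub_left (Commute.refl m)).mul_left hpm
  have hDp : Commute (m * m - m) p := (hpm.symm.mul_left hpm.symm).sub_left hpm.symm
  have hqp : Commute q p := hDp.mul_left (Commute.refl p)
  have hms : Commute m s := (hqm.mul_left (hx m hqm)).symm
  have hps : Commute p s := (hqp.mul_left (hx p hqp)).symm
  have hsp : s * p = s := by
    rw [← hps.eq, hsdef, ← mul_assoc, ← hqp.eq, hqdef, mul_assoc (m * m - m), hpp]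
  have htwo : ∀ y : A, Commute 2 y := fun y => Commute.ofNat_left 2 y
  have hv : IsUnit (1 - 2 * s) := (hs.mul_left (htwo s)).isUnit_sub isUnit_one (Commute.one_left _)
  obtain ⟨v, hv⟩ := hv
  have hinv : ∀ y, Commute y s → Commute y (↑v⁻¹ : A) := fun y hy => by
    refine Commute.units_inv_right ?_
    rw [hv]
    exact (Commute.one_right y).sub_right ((htwo y).symm.mul_right hy)
  obtain ⟨hff, hmf, hunit⟩ := spectral_idempotent_identities_of_commute hpm.symm hms (hinv m hms)
    hps (hinv p hps) (hinv s (Commute.refl s)) hpp hsq hsp (by rw [← hv, v.mul_inv])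
  have hfcomm : ∀ y, Commute y m → Commute y p → Commute y s →
      Commute y (p * (1 - s - m) * ↑v⁻¹) := fun y hym hyp hys =>
    (hyp.mul_right (((Commute.one_right y).sub_right hys).sub_right hym)).mul_right (hinv y hys)
  have hmf' := hfcomm m (Commute.refl m) hpm.symm hms
  have hpf := hfcomm p hpm (Commute.refl p) hps
  have hsf := hfcomm s hms.symm hps.symm (Commute.refl s)
  generalize p * (1 - s - m) * (↑v⁻¹ : A) = f at *
  refine hasGDrazin_iff_exists_idempotent.2 ⟨f, hff, hmf'.symm, ?_, ?_⟩
  · rw [hmf, hsf.eq]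
    exact hs.mul_left hsf.symm
  · have hg : ∀ y, Commute y m → Commute y p → Commute y ((m - 1) * (1 - p) + p) :=
      fun y hym hyp => ((hym.sub_right (Commute.one_right y)).mul_right
        ((Commute.one_right y).sub_right hyp)).add_right hyp
    have hr : ∀ y, Commute y s → Commute y p → Commute y f →
        Commute y (s - 1 + p - 2 * f) := fun y hys hyp hyf =>
      ((hys.sub_right (Commute.one_right y)).add_right hyp).sub_right
        ((htwo y).symm.mul_right hyf)
    refine (((hg m (Commute.refl m) hpm.symm).add_left
      (hg f hmf'.symm hpf.symm)).isUnit_mul_iff.1 ?_).1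
    rw [hunit, (hr s (Commute.refl s) hps.symm hsf).eq]
    have hDs : ∀ y, Commute m y → Commute p y → Commute (m * m - m + p) y := fun y hym hyp =>
      ((hym.mul_left hym).sub_left hym).add_left hyp
    exact (hs.mul_left (hr s (Commute.refl s) hps.symm hsf).symm).isUnit_sub hu
      (hDs _ ((hr m hms hpm.symm hmf').mul_right hms) ((hr p hps (Commute.refl p) hpf).mul_right hps))

theorem spectral_idempotents_orthogonal {m p p' : A} (hpp : p * p = p) (hpp' : p' * p' = p')
    (hpm : Commute p m) (hpm' : Commute p' m) (hq : Quasinilpotent (m * p))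
    (hq' : Quasinilpotent ((1 - m) * p')) : p * p' = 0 := by
  have hu : IsUnit (1 - m * p) := hq.isUnit_sub isUnit_one (Commute.one_left _)
  obtain ⟨u, hu⟩ := hu
  refine hq'.eq_zero_of_eq_mul_mul (x := ↑u⁻¹) ?_
  rw [mul_assoc, eq_comm, Units.inv_mul_eq_iff_eq_mul, hu]
  calc p * p' * ((1 - m) * p') = p * (p' * p') - p * (p' * m) * p' := by noncomm_ring
    _ = p * p' - p * m * (p' * p') := by rw [hpm'.eq, hpp']; noncomm_ring [hpp']
    _ = (1 - m * p) * (p * p') := by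
      rw [hpp', hpm.eq, sub_mul, one_mul, ← mul_assoc (m * p), mul_assoc m p p, hpp]

theorem spectral_idempotent_add {m p p' : A} (hpp : p * p = p) (hpp' : p' * p' = p')
    (hpm : Commute p m) (hpm' : Commute p' m) (hq : Quasinilpotent (m * p))
    (hq' : Quasinilpotent ((1 - m) * p')) (hu : IsUnit (m + p)) (hu' : IsUnit (1 - m + p')) :
    (p + p') * (p + p') = p + p' ∧ Quasinilpotent ((m * m - m) * (p + p')) ∧
      IsUnit (m * m - m + (p + p')) := by
  have hz : p * p' = 0 := spectral_idempotents_orthogonal hpp hpp' hpm hpm' hq hq'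
  have hz' : p' * p = 0 := by
    refine spectral_idempotents_orthogonal (m := 1 - m) hpp' hpp
      ((Commute.one_right _).sub_right hpm') ((Commute.one_right _).sub_right hpm) hq' ?_
    rwa [sub_sub_cancel]
  have hc : Commute p p' := hz.trans hz'.symm
  have hee : (p + p') * (p + p') = p + p' := by
    rw [mul_add, add_mul, add_mul, hpp, hpp', hz, hz', zero_add, add_zero]
  have h1m : Commute (1 - m) m := (Commute.one_left m).sub_left (Commute.refl m)
  have h1p : Commute (1 - m) p := (Commute.one_left p).sub_left hpm.symm
  have hmq : Commute m (m * p) := (Commute.refl m).mul_right hpm.symm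
  have hmq' : Commute m ((1 - m) * p') := h1m.symm.mul_right hpm'.symm
  have hpq' : Commute p ((1 - m) * p') := h1p.symm.mul_right hc
  have hqq' : Commute (m * p) ((1 - m) * p') := hmq'.mul_left hpq'
  have hD : (m * m - m) * (p + p') = -((1 - m) * (m * p) + m * ((1 - m) * p')) := by noncomm_ring
  have hQ : Quasinilpotent ((m * m - m) * (p + p')) := by
    rw [hD]
    refine ((hq.mul_left ?_).add (hq'.mul_left hmq') ?_).neg
    · exact (Commute.one_left _).sub_left hmq
    · exact (((Commute.one_left _).sub_left (Commute.refl m)).mul_left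
        (hmq.symm)).mul_right (((Commute.one_left _).sub_left hmq').mul_left hqq')
  refine ⟨hee, hQ, ?_⟩
  have htwo : ∀ y : A, Commute 2 y := fun y => Commute.ofNat_left 2 y
  have hidem : IsUnit (1 - 2 * (p + p')) := by
    have hsq : (1 - 2 * (p + p')) * (1 - 2 * (p + p')) = 1 := by noncomm_ring [hpp, hpp', hz, hz']
    exact ⟨⟨_, _, hsq, hsq⟩, rfl⟩
  have hprod : m * m - m + (p + p') = (m + p) * -(1 - m + p') * (1 - 2 * (p + p')) +
      (m * p + (1 - m) * p' + 2 * ((m * m - m) * (p + p'))) := by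
    have hpe : p * (p + p') = p := by rw [mul_add, hpp, hz, add_zero]
    have hpe' : p' * (p + p') = p' := by rw [mul_add, hpp', hz', zero_add]
    have hW : (m + p) * -(1 - m + p') = m * m - m - m * p' + m * p - p := by
      calc (m + p) * -(1 - m + p') = m * m - m - m * p' + p * m - p - p * p' := by noncomm_ring
        _ = _ := by rw [hz, hpm.eq, sub_zero]
    have hWe : (m * m - m - m * p' + m * p - p) * (p + p') =
        (m * m - m) * (p + p') - m * p' + m * p - p := by
      rw [sub_mul, add_mul, sub_mul, mul_assoc m p', mul_assoc m p, hpe, hpe']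
    rw [hW, mul_sub, mul_one, ← mul_assoc, ← (htwo _).eq, mul_assoc, hWe]
    noncomm_ring
  have hcommD : ∀ y, Commute y m → Commute y p → Commute y p' →
      Commute y ((m * m - m) * (p + p')) := fun y hm h h' =>
    ((hm.mul_right hm).sub_right hm).mul_right (h.add_right h')
  have hcommR : ∀ y, Commute y m → Commute y p → Commute y p' →
      Commute y (m * p + (1 - m) * p' + 2 * ((m * m - m) * (p + p'))) := fun y hm h h' =>
    ((hm.mul_right h).add_right (((Commute.one_right y).sub_right hm).mul_right h')).add_right
      ((htwo y).symm.mul_right (hcommD y hm h h'))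
  have hDm := hcommD m (Commute.refl m) hpm.symm hpm'.symm
  have hDp := hcommD p hpm (Commute.refl p) hc
  have hDp' := hcommD p' hpm' hc.symm (Commute.refl p')
  have hR : Quasinilpotent (m * p + (1 - m) * p' + 2 * ((m * m - m) * (p + p'))) :=
    (hq.add hq' hqq').add (hQ.mul_left (htwo _)) <| (htwo _).symm.mul_right <|
      (hDm.mul_left hDp).add_left (((Commute.one_left _).sub_left hDm).mul_left hDp')
  have hRm := hcommR m (Commute.refl m) hpm.symm hpm'.symm
  have hRp := hcommR p hpm (Commute.refl p) hc
  have hRp' := hcommR p' hpm' hc.symm (Commute.refl p')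
  rw [hprod]
  exact hR.isUnit_add ((hu.mul hu'.neg).mul hidem) <|
    ((hRm.add_left hRp).mul_left
      (((Commute.one_left _).sub_left hRm).add_left hRp').neg_left).mul_left
        ((Commute.one_left _).sub_left ((htwo _).mul_left (hRp.add_left hRp')))

end Banach

section Matrix

theorem Matrix.isUnit_scalar_iff {R : Type*} [Ring R] {x : R} :
    IsUnit (Matrix.scalar (Fin 2) x) ↔ IsUnit x := by
  refine ⟨fun ⟨u, hu⟩ => ?_, fun h => h.map _⟩
  have h := congrFun₂ (u.mul_inv) 0 0
  have h' := congrFun₂ (u.inv_mul) 0 0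
  simp only [hu, Matrix.scalar_apply, Matrix.diagonal_mul, Matrix.mul_diagonal,
    Matrix.one_apply_eq] at h h'
  exact ⟨⟨x, _, h, h'⟩, rfl⟩

theorem quasinilpotent_scalar_iff {R : Type*} [Ring R] [Algebra ℂ R] {x : R} :
    Quasinilpotent (Matrix.scalar (Fin 2) x) ↔ Quasinilpotent x := by
  simp only [quasinilpotent_iff_isUnit]
  refine forall₂_congr fun c _ => ?_
  rw [← Matrix.isUnit_scalar_iff (x := algebraMap ℂ R c - x), map_sub]
  rfl

theorem mul_self_sub_companion {R : Type*} [Ring R] (a : R) :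
    (!![1, 1; a, 0] : Matrix (Fin 2) (Fin 2) R) * !![1, 1; a, 0] - !![1, 1; a, 0] =
      Matrix.scalar (Fin 2) a := by
  ext i j
  fin_cases i <;> fin_cases j <;> simp

theorem root_involution_mul_self {R : Type*} [Ring R] :
    (!![1, 0; -1, -1] : Matrix (Fin 2) (Fin 2) R) * !![1, 0; -1, -1] = 1 := by
  ext i j
  fin_cases i <;> fin_cases j <;> simp

theorem root_involution_mul_companion {R : Type*} [Ring R] (a : R) :
    (!![1, 0; -1, -1] : Matrix (Fin 2) (Fin 2) R) * !![1, 1; a, 0] =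
      (1 - !![1, 1; a, 0]) * !![1, 0; -1, -1] := by
  ext i j
  fin_cases i <;> fin_cases j <;> simp [sub_mul, neg_add_eq_sub, add_comm]

theorem Quasinilpotent.conj {R : Type*} [Ring R] [Algebra ℂ R] {q t : R} (hq : Quasinilpotent q)
    (ht : t * t = 1) : Quasinilpotent (t * q * t) := by
  rw [quasinilpotent_iff_isUnit] at hq ⊢
  intro c hc
  have hu : IsUnit t := ⟨⟨t, t, ht, ht⟩, rfl⟩
  have h := (hu.mul (hq c hc)).mul hu
  rwa [mul_sub, sub_mul, ← Algebra.commutes, mul_assoc _ t t, ht, mul_one] at h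

/-- A matrix commuting with the companion matrix and with the involution exchanging the two roots
of its characteristic polynomial is scalar. -/
theorem eq_scalar_of_commute {R : Type*} [Ring R] [Algebra ℂ R] {a : R}
    {e : Matrix (Fin 2) (Fin 2) R} (hm : Commute e !![1, 1; a, 0])
    (ht : Commute e !![1, 0; -1, -1]) : e = Matrix.scalar (Fin 2) (e 0 0) := by
  have ht01 := congrFun₂ ht.eq 0 1
  have hm01 := congrFun₂ hm.eq 0 1
  have hm00 := congrFun₂ hm.eq 0 0
  simp [Matrix.mul_apply] at ht01 hm01 hm00
  have h01 : e 0 1 = 0 := by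
    have htwo : (2 : ℂ) • e 0 1 = 0 := by rw [two_smul, ← eq_neg_iff_add_eq_zero, ht01]
    exact ((IsUnit.mk0 (2 : ℂ) two_ne_zero).smul_eq_zero).1 htwo
  ext i j
  fin_cases i <;> fin_cases j <;> simp [h01, hm01, ← hm00]

end Matrix

theorem stmt12 {A : Type*} [NormedRing A] [NormedAlgebra ℂ A] [CompleteSpace A] (a : A) :
    HasGDrazin a ↔ HasGDrazin (!![1, 1; a, 0] : Matrix (Fin 2) (Fin 2) A) := by
  have hcomplete : CompleteSpace (Matrix (Fin 2) (Fin 2) A) := inferInstance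
  let _ : NormedRing (Matrix (Fin 2) (Fin 2) A) := Matrix.linftyOpNormedRing
  let _ : NormedAlgebra ℂ (Matrix (Fin 2) (Fin 2) A) := Matrix.linftyOpNormedAlgebra
  have : @CompleteSpace (Matrix (Fin 2) (Fin 2) A) PseudoMetricSpace.toUniformSpace := hcomplete
  constructor
  · intro h
    obtain ⟨p, hpp, hpa, hq, hu⟩ := hasGDrazin_iff_exists_idempotent.1 h
    refine hasGDrazin_of_mul_self_sub (p := Matrix.scalar (Fin 2) p) ?_ ?_ ?_ ?_
    · rw [← map_mul, hpp]
    · ext i j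
      fin_cases i <;> fin_cases j <;> simp [hpa.eq]
    · rw [mul_self_sub_companion, ← map_mul]
      exact quasinilpotent_scalar_iff.2 hq
    · rw [mul_self_sub_companion, ← map_add]
      exact Matrix.isUnit_scalar_iff.2 hu
  · intro h
    obtain ⟨p, hpp, hpm, hq, hu⟩ := hasGDrazin_iff_exists_idempotent.1 h
    have hD := mul_self_sub_companion a
    set m : Matrix (Fin 2) (Fin 2) A := !![1, 1; a, 0] with hm
    obtain ⟨t, htdef⟩ : ∃ t : Matrix (Fin 2) (Fin 2) A, t = !![1, 0; -1, -1] := ⟨_, rfl⟩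
    have htt : t * t = 1 := by
      rw [htdef, root_involution_mul_self]
    have htm : t * m = (1 - m) * t := htdef ▸ root_involution_mul_companion a
    have htmt : t * m * t = 1 - m := by rw [htm, mul_assoc, htt, mul_one]
    have hconj : ∀ x y, t * x * t * (t * y * t) = t * (x * y) * t := fun x y => by
      calc t * x * t * (t * y * t) = t * x * (t * t) * y * t := by noncomm_ring
        _ = t * (x * y) * t := by rw [htt]; noncomm_ring
    have htu : IsUnit t := ⟨⟨t, t, htt, htt⟩, rfl⟩
    have hpm' : Commute (t * p * t) (1 - m) := by
      rw [← htmt, commute_iff_eq, hconj, hconj, hpm.eq]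
    have hpm'' : Commute (t * p * t) m := by
      simpa using (Commute.one_right (t * p * t)).sub_right hpm'
    obtain ⟨hee, hQ, hU⟩ := spectral_idempotent_add (p' := t * p * t) hpp
      (by rw [hconj, hpp]) hpm hpm'' hq
      (by rw [← htmt, hconj]; exact hq.conj htt) hu
      (by rw [← htmt, ← add_mul, ← mul_add]; exact (htu.mul hu).mul htu)
    have het : Commute (p + t * p * t) t := by
      rw [commute_iff_eq]
      calc (p + t * p * t) * t = p * t + t * p * (t * t) := by noncomm_ring
        _ = t * p + (t * t) * p * t := by rw [htt]; noncomm_ring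
        _ = t * (p + t * p * t) := by noncomm_ring
    have hem : Commute (p + t * p * t) m := hpm.add_left hpm''
    have he := eq_scalar_of_commute hem (htdef ▸ het)
    generalize p + t * p * t = e at *
    rw [hD, he, ← map_mul, quasinilpotent_scalar_iff] at hQ
    rw [hD, he, ← map_add, Matrix.isUnit_scalar_iff] at hU
    refine hasGDrazin_iff_exists_idempotent.2 ⟨e 0 0, ?_, ?_, hQ, hU⟩
    · have h00 := congrFun₂ hee 0 0
      rw [he] at h00
      simpa using h00
    · have h10 := congrFun₂ hem.eq 1 0
      rw [he] at h10
      simpa [hm, commute_iff_eq] using h10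
end

section
/- Let A be a complex unital Banach algebra, a, b, c ∈ A with a² = a and ab = b. Then the anti-triangular matrix M = [[a,b],[c,0]] has g-Drazin inverse in M₂(A) if and only if bc has g-Drazin inverse in A. -/
open Filter Finset

open Complex in
/-- The `k`-th moment `(2πi)⁻¹ ∮ zᵏ (z - x)⁻¹ dz` of the resolvent over the circle `|z| = r`. -/
noncomputable def resolventMoment {B : Type*} [NormedRing B] [NormedAlgebra ℂ B]
    (x : B) (r : ℝ) (k : ℤ) : B :=
  (2 * Real.pi * I : ℂ)⁻¹ • ∮ z in C(0, r), z ^ k • resolvent x z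

section Banach

variable {B : Type*}

theorem quasinilpotent_iff [Ring B] [Algebra ℂ B] {q : B} :
    Quasinilpotent q ↔ ∀ z : ℂ, z ≠ 0 → z ∈ resolventSet ℂ q := by
  simp only [Quasinilpotent, spectralRadius, ENNReal.iSup_eq_zero, ENNReal.coe_eq_zero,
    nnnorm_eq_zero]
  exact forall_congr' fun z => by rw [spectrum, Set.mem_compl_iff, not_imp_comm]

variable [NormedRing B] [NormedAlgebra ℂ B] [CompleteSpace B]

theorem HasGDrazin.exists_mem_resolventSet {x : B} (h : HasGDrazin x) :
    ∃ R > 0, ∀ z : ℂ, z ≠ 0 → ‖z‖ < R → z ∈ resolventSet ℂ x := by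
  obtain ⟨d, hxd, hd, hq⟩ := h
  rw [quasinilpotent_iff] at hq
  refine ⟨(‖d‖ * ‖(1 : B)‖ + 1)⁻¹, by positivity, fun z hz hzR => ?_⟩
  have hunit : IsUnit (z • d - 1) := by
    have hmem : z⁻¹ ∈ resolventSet ℂ d := by
      refine spectrum.mem_resolventSet_of_norm_lt_mul ?_
      rw [norm_inv]
      have := (lt_inv_comm₀ (norm_pos_iff.2 hz) (by positivity)).1 hzR
      linarith
    have hu : IsUnit (algebraMap ℂ B (-z) * (algebraMap ℂ B z⁻¹ - d)) :=
      ((IsUnit.mk0 _ (neg_ne_zero.2 hz)).map (algebraMap ℂ B)).mul hmem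
    rwa [← Algebra.smul_def, Algebra.algebraMap_eq_smul_one, smul_sub, smul_smul, neg_mul, mul_inv_cancel₀ hz,
      neg_smul, neg_smul, one_smul, sub_neg_eq_add, neg_add_eq_sub] at hu
  have hz1 := hq z hz
  rw [spectrum.mem_resolventSet_iff, Algebra.algebraMap_eq_smul_one] at hz1 ⊢
  have hdd : d * (d * x) = d := by rw [← hxd, ← mul_assoc]; exact hd.symm
  have hxdd : x * (d * d) = d := by rw [← mul_assoc, hxd, mul_assoc, hxd, hdd]
  have e1 : (z • (1 : B) - x) * (z • d - (1 - x * d)) =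
      (z • (1 : B) - (x - x ^ 2 * d)) * (z • d - 1) := by
    simp only [sub_mul, mul_sub, smul_mul_assoc, mul_smul_comm, one_mul, mul_one, pow_two,
      mul_assoc, hxdd, smul_sub]
    abel
  have hcomm : Commute (z • (1 : B) - x) (z • d - (1 - x * d)) := by
    have hd' : Commute x d := hxd
    have hx : Commute x (z • d - (1 - x * d)) := (hd'.smul_right z).sub_right
      ((Commute.one_right x).sub_right ((Commute.refl x).mul_right hd'))
    exact ((Commute.one_left _).smul_left z).sub_left hx
  exact (hcomm.isUnit_mul_iff.1 (e1 ▸ hz1.mul hunit)).1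

section Moment

variable {x : B} {R r s : ℝ}

theorem differentiableOn_zpow_smul_resolvent
    (h : ∀ z : ℂ, z ≠ 0 → ‖z‖ < R → z ∈ resolventSet ℂ x) (k : ℤ) :
    DifferentiableOn ℂ (fun z : ℂ => z ^ k • resolvent x z) {z | z ≠ 0 ∧ ‖z‖ < R} :=
  fun z hz => ((differentiableAt_zpow.2 (.inl hz.1)).smul
    (spectrum.hasDerivAt_resolvent_const_left
      (h z hz.1 hz.2)).differentiableAt).differentiableWithinAt

theorem sphere_subset_punctured_ball (hr : 0 < r) (hrR : r < R) :
    Metric.sphere (0 : ℂ) r ⊆ {z | z ≠ 0 ∧ ‖z‖ < R} := by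
  intro z hz
  rw [mem_sphere_zero_iff_norm] at hz
  exact ⟨norm_pos_iff.1 (hz ▸ hr), hz ▸ hrR⟩

theorem resolventMoment_eq_of_le (h : ∀ z : ℂ, z ≠ 0 → ‖z‖ < R → z ∈ resolventSet ℂ x)
    (hr : 0 < r) (hrs : r ≤ s) (hs : s < R) (k : ℤ) :
    resolventMoment x s k = resolventMoment x r k := by
  have hdiff := differentiableOn_zpow_smul_resolvent h k
  have hopen : IsOpen {z : ℂ | z ≠ 0 ∧ ‖z‖ < R} :=
    isOpen_ne.inter (isOpen_lt continuous_norm continuous_const)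
  unfold resolventMoment
  rw [Complex.circleIntegral_eq_of_differentiable_on_annulus_off_countable hr hrs
    Set.countable_empty]
  · refine hdiff.continuousOn.mono fun z hz => ?_
    simp only [Set.mem_sdiff, mem_closedBall_zero_iff, mem_ball_zero_iff, not_lt] at hz
    exact ⟨norm_pos_iff.1 (hr.trans_le hz.2), hz.1.trans_lt hs⟩
  · intro z hz
    simp only [Set.mem_sdiff, mem_closedBall_zero_iff, mem_ball_zero_iff, not_le] at hz
    exact hdiff.differentiableAt
      (hopen.mem_nhds ⟨norm_pos_iff.1 (hr.trans hz.1.2), hz.1.1.trans hs⟩)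

theorem exists_norm_resolventMoment_le
    (h : ∀ z : ℂ, z ≠ 0 → ‖z‖ < R → z ∈ resolventSet ℂ x) (hr : 0 < r) (hrR : r < R) :
    ∃ K, ∀ k : ℤ, ‖resolventMoment x r k‖ ≤ K * r ^ k := by
  obtain ⟨K, hK⟩ := (isCompact_sphere (0 : ℂ) r).exists_bound_of_continuousOn
    ((differentiableOn_zpow_smul_resolvent h 0).continuousOn.mono
      (sphere_subset_punctured_ball hr hrR))
  refine ⟨r * K, fun k => ?_⟩
  refine (circleIntegral.norm_two_pi_i_inv_smul_integral_le_of_norm_le_const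
    (C := r ^ k * K) hr.le fun z hz => ?_).trans_eq (by ring)
  have := hK z hz
  rw [zpow_zero, one_smul] at this
  rw [norm_smul, norm_zpow, mem_sphere_zero_iff_norm.1 hz]
  gcongr

theorem map_resolventMoment (h : ∀ z : ℂ, z ≠ 0 → ‖z‖ < R → z ∈ resolventSet ℂ x)
    (hr : 0 < r) (hrR : r < R) (k : ℤ) (L : B →L[ℂ] B)
    (hL : ∀ z ∈ resolventSet ℂ x, L (resolvent x z) = z • resolvent x z - 1) :
    L (resolventMoment x r k) =
      resolventMoment x r (k + 1) - (if k = -1 then 1 else 0 : B) := by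
  have hsub := sphere_subset_punctured_ball hr hrR
  have hint (k : ℤ) : CircleIntegrable (fun z : ℂ => z ^ k • resolvent x z) 0 r :=
    ((differentiableOn_zpow_smul_resolvent h k).continuousOn.mono hsub).circleIntegrable hr.le
  have hint' : CircleIntegrable (fun z : ℂ => z ^ k • (1 : B)) 0 r :=
    ContinuousOn.circleIntegrable hr.le
      (ContinuousOn.smul (fun z hz => (continuousAt_zpow₀ z k
        (.inl (hsub hz).1)).continuousWithinAt) continuousOn_const)
  have hcomm : L (∮ z in C(0, r), z ^ k • resolvent x z) =
      ∮ z in C(0, r), L (z ^ k • resolvent x z) := by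
    simp only [circleIntegral]
    rw [← L.intervalIntegral_comp_comm (hint k).out]
    simp only [map_smul]
  have hcongr : (∮ z in C(0, r), L (z ^ k • resolvent x z)) =
      ∮ z in C(0, r), (z ^ (k + 1) • resolvent x z - z ^ k • (1 : B)) := by
    refine circleIntegral.integral_congr hr.le fun z hz => ?_
    have hz := hsub hz
    simp only [map_smul, hL z (h z hz.1 hz.2), smul_sub, smul_smul, zpow_add_one₀ hz.1]
  unfold resolventMoment
  rw [map_smul, hcomm, hcongr, circleIntegral.integral_sub (hint _) hint', smul_sub,
    circleIntegral.integral_smul_const, smul_smul]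
  congr 1
  split_ifs with hk
  · have := circleIntegral.integral_sub_center_inv 0 hr.ne'
    simp only [sub_zero] at this
    simp only [hk, zpow_neg_one, this]
    rw [inv_mul_cancel₀ Complex.two_pi_I_ne_zero, one_smul]
  · have := circleIntegral.integral_sub_zpow_of_ne hk 0 0 r
    simp only [sub_zero] at this
    rw [this, mul_zero, zero_smul]

theorem mul_resolventMoment (h : ∀ z : ℂ, z ≠ 0 → ‖z‖ < R → z ∈ resolventSet ℂ x)
    (hr : 0 < r) (hrR : r < R) (k : ℤ) :
    x * resolventMoment x r k =
      resolventMoment x r (k + 1) - (if k = -1 then 1 else 0 : B) := by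
  refine map_resolventMoment h hr hrR k (ContinuousLinearMap.mul ℂ B x) fun z hz => ?_
  have := Ring.mul_inverse_cancel _ hz
  rw [sub_mul, ← Algebra.smul_def] at this
  rw [ContinuousLinearMap.mul_apply', resolvent, ← this, sub_sub_cancel]

theorem resolventMoment_mul (h : ∀ z : ℂ, z ≠ 0 → ‖z‖ < R → z ∈ resolventSet ℂ x)
    (hr : 0 < r) (hrR : r < R) (k : ℤ) :
    resolventMoment x r k * x =
      resolventMoment x r (k + 1) - (if k = -1 then 1 else 0 : B) := by
  refine map_resolventMoment h hr hrR k ((ContinuousLinearMap.mul ℂ B).flip x) fun z hz => ?_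
  have := Ring.inverse_mul_cancel _ hz
  rw [mul_sub, ← Algebra.commutes, ← Algebra.smul_def] at this
  rw [ContinuousLinearMap.flip_apply, ContinuousLinearMap.mul_apply', resolvent, ← this,
    sub_sub_cancel]

theorem pow_mul_resolventMoment_zero
    (h : ∀ z : ℂ, z ≠ 0 → ‖z‖ < R → z ∈ resolventSet ℂ x) (hr : 0 < r) (hrR : r < R) (n : ℕ) :
    x ^ n * resolventMoment x r 0 = resolventMoment x r n := by
  induction n with
  | zero => simp
  | succ n ih =>
    rw [pow_succ', mul_assoc, ih, mul_resolventMoment h hr hrR, if_neg (by lia), sub_zero]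
    simp

theorem resolventMoment_mul_pow
    (h : ∀ z : ℂ, z ≠ 0 → ‖z‖ < R → z ∈ resolventSet ℂ x) (hr : 0 < r) (hrR : r < R) (n : ℕ) :
    resolventMoment x r (-1 - n) * x ^ n = resolventMoment x r (-1) := by
  induction n with
  | zero => simp
  | succ n ih =>
    rw [pow_succ', ← mul_assoc, resolventMoment_mul h hr hrR, if_neg (by lia), sub_zero, ← ih]
    congr 2
    push_cast
    ring

theorem resolventMoment_neg_one_mul_zero
    (h : ∀ z : ℂ, z ≠ 0 → ‖z‖ < R → z ∈ resolventSet ℂ x) (hs : 0 < s) (hsR : s < R) :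
    resolventMoment x s (-1) * resolventMoment x s 0 = 0 := by
  have hr : 0 < s / 2 := half_pos hs
  have hrs : s / 2 ≤ s := (half_lt_self hs).le
  have hrR := hrs.trans_lt hsR
  obtain ⟨K, hK⟩ := exists_norm_resolventMoment_le h hr hrR
  obtain ⟨K', hK'⟩ := exists_norm_resolventMoment_le h hs hsR
  have hbound (n : ℕ) : ‖resolventMoment x s (-1) * resolventMoment x s 0‖ ≤
      K' * s⁻¹ * K * (1 / 2) ^ n := by
    rw [← resolventMoment_mul_pow h hs hsR n, mul_assoc, pow_mul_resolventMoment_zero h hs hsR,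
      resolventMoment_eq_of_le h hr hrs hsR n]
    refine (norm_mul_le _ _).trans ((mul_le_mul (hK' _) (hK _) (norm_nonneg _)
      ((norm_nonneg _).trans (hK' _))).trans_eq ?_)
    rw [zpow_sub₀ hs.ne', zpow_natCast, zpow_natCast, zpow_neg_one, div_pow, div_pow, one_pow]
    field_simp
  have hlim : Tendsto (fun n : ℕ => K' * s⁻¹ * K * (1 / 2 : ℝ) ^ n) atTop (nhds 0) := by
    simpa using (tendsto_pow_atTop_nhds_zero_of_lt_one (r := (1 / 2 : ℝ)) (by norm_num)
      (by norm_num)).const_mul (K' * s⁻¹ * K)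
  exact norm_le_zero_iff.1 (ge_of_tendsto' hlim hbound)

end Moment

theorem quasinilpotent_of_norm_pow_le {q : B}
    (h : ∀ ε > 0, ∃ r > 0, r < ε ∧ ∃ K : ℝ, ∀ n : ℕ, 0 < n → ‖q ^ n‖ ≤ K * r ^ n) :
    Quasinilpotent q := by
  rw [quasinilpotent_iff]
  intro z hz
  by_contra hmem
  obtain ⟨r, hr, hrz, K, hK⟩ := h ‖z‖ (norm_pos_iff.2 hz)
  have hbound (n : ℕ) (hn : 0 < n) : 1 ≤ K * ‖(1 : B)‖ * (r / ‖z‖) ^ n := by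
    have h1 := spectrum.norm_le_norm_mul_of_mem (spectrum.pow_mem_pow q n hmem)
    have h2 := h1.trans (mul_le_mul_of_nonneg_right (hK n hn) (norm_nonneg _))
    rw [norm_pow] at h2
    have hzn : 0 < ‖z‖ ^ n := pow_pos (norm_pos_iff.2 hz) n
    rw [div_pow, ← mul_div_assoc, le_div_iff₀ hzn]
    linarith
  have hlim : Tendsto (fun n : ℕ => K * ‖(1 : B)‖ * (r / ‖z‖) ^ n) atTop (nhds 0) := by
    simpa using (tendsto_pow_atTop_nhds_zero_of_lt_one (r := r / ‖z‖) (by positivity)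
      ((div_lt_one (norm_pos_iff.2 hz)).2 hrz)).const_mul (K * ‖(1 : B)‖)
  have := ge_of_tendsto hlim ((eventually_gt_atTop 0).mono hbound)
  linarith

theorem hasGDrazin_of_mem_resolventSet {x : B} {R : ℝ} (hR : 0 < R)
    (h : ∀ z : ℂ, z ≠ 0 → ‖z‖ < R → z ∈ resolventSet ℂ x) : HasGDrazin x := by
  obtain ⟨s, hs, hsR⟩ := exists_between hR
  set p := resolventMoment x s 0 with hp
  set d := -resolventMoment x s (-1) with hd
  have hxd : x * d = 1 - p := by
    rw [hd, mul_neg, mul_resolventMoment h hs hsR, if_pos rfl, neg_add_cancel, ← hp, neg_sub]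
  have hdx : d * x = 1 - p := by
    rw [hd, neg_mul, resolventMoment_mul h hs hsR, if_pos rfl, neg_add_cancel, ← hp, neg_sub]
  have hdp : d * p = 0 := by
    rw [hd, neg_mul, resolventMoment_neg_one_mul_zero h hs hsR, neg_zero]
  have hdxd : d * x * d = d := by rw [mul_assoc, hxd, mul_sub, hdp, mul_one, sub_zero]
  have hpp : IsIdempotentElem p := by
    have : (1 - p) * p = 0 := by rw [← hxd, mul_assoc, hdp, mul_zero]
    rw [sub_mul, one_mul, sub_eq_zero] at this
    exact this.symm
  have hcomm : Commute x p := by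
    have : p = 1 - x * d := by rw [hxd, sub_sub_cancel]
    rw [this]
    refine (Commute.one_right x).sub_right ((Commute.refl x).mul_right ?_)
    exact hxd.trans hdx.symm
  have hq : x - x ^ 2 * d = x * p := by
    rw [pow_two, mul_assoc, hxd, mul_sub, mul_one, sub_sub_cancel]
  refine ⟨d, hxd.trans hdx.symm, hdxd.symm, hq ▸ quasinilpotent_of_norm_pow_le ?_⟩
  intro ε hε
  obtain ⟨r, hr, hrm⟩ := exists_between (lt_min hε hs)
  have hrs : r < s := hrm.trans_le (min_le_right _ _)
  obtain ⟨K, hK⟩ := exists_norm_resolventMoment_le h hr (hrs.trans hsR)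
  refine ⟨r, hr, hrm.trans_le (min_le_left _ _), K, fun n hn => ?_⟩
  rw [hcomm.mul_pow, hpp.pow_eq hn.ne', hp, pow_mul_resolventMoment_zero h hs hsR,
    resolventMoment_eq_of_le h hr hrs.le hsR, ← zpow_natCast r]
  exact hK n

/-- Koliha's criterion: the generalized Drazin inverse exists iff `0` is not an accumulation
point of the spectrum. -/
theorem hasGDrazin_iff {x : B} :
    HasGDrazin x ↔ ∃ R > 0, ∀ z : ℂ, z ≠ 0 → ‖z‖ < R → z ∈ resolventSet ℂ x :=
  ⟨HasGDrazin.exists_mem_resolventSet, fun ⟨_, hR, h⟩ => hasGDrazin_of_mem_resolventSet hR h⟩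

end Banach

theorem isUnit_diagonal_iff {A : Type*} [Ring A] {S T : A} (hT : IsUnit T) :
    IsUnit (!![S, 0; 0, T] : Matrix (Fin 2) (Fin 2) A) ↔ IsUnit S := by
  constructor
  · rintro ⟨⟨U, V, hUV, hVU⟩, rfl⟩
    have h1 := congrFun₂ hUV 0 0
    have h2 := congrFun₂ hVU 0 0
    simp [Matrix.mul_apply, Fin.sum_univ_two] at h1 h2
    exact ⟨⟨S, V 0 0, h1, h2⟩, rfl⟩
  · rintro ⟨u, rfl⟩
    obtain ⟨v, rfl⟩ := hT
    refine ⟨⟨!![u, 0; 0, v], !![↑u⁻¹, 0; 0, ↑v⁻¹], ?_, ?_⟩, rfl⟩ <;>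
      simp [Matrix.one_fin_two]

section Algebraic

variable {A : Type*} [Ring A] [Algebra ℂ A]

theorem mem_resolventSet_antitriangular_iff (a b c : A) {z : ℂ} (hz : z ≠ 0) :
    z ∈ resolventSet ℂ (!![a, b; c, 0] : Matrix (Fin 2) (Fin 2) A) ↔
      IsUnit ((z ^ 2) • (1 : A) - z • a - b * c) := by
  have hL : IsUnit (!![z • (1 : A), 0; c, 1] : Matrix (Fin 2) (Fin 2) A) := by
    refine ⟨⟨_, !![z⁻¹ • (1 : A), 0; -(z⁻¹ • c), 1], ?_, ?_⟩, rfl⟩ <;>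
      simp [Matrix.one_fin_two, hz, smul_smul]
  have hU : IsUnit (!![1, -(z⁻¹ • b); 0, 1] : Matrix (Fin 2) (Fin 2) A) := by
    refine ⟨⟨_, !![1, z⁻¹ • b; 0, 1], ?_, ?_⟩, rfl⟩ <;> simp [Matrix.one_fin_two]
  have hz1 : IsUnit (z • (1 : A)) := by
    rw [← Algebra.algebraMap_eq_smul_one]
    exact (IsUnit.mk0 z hz).map (algebraMap ℂ A)
  have hfac : (algebraMap ℂ (Matrix (Fin 2) (Fin 2) A) z - !![a, b; c, 0]) *
      !![z • (1 : A), 0; c, 1] =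
      !![1, -(z⁻¹ • b); 0, 1] * !![(z ^ 2) • (1 : A) - z • a - b * c, 0; 0, z • (1 : A)] := by
    ext i j
    fin_cases i <;> fin_cases j <;>
      simp [Matrix.mul_apply, Fin.sum_univ_two, hz, smul_smul, Algebra.algebraMap_eq_smul_one,
        sub_mul, pow_two, sub_sub]
  rw [spectrum.mem_resolventSet_iff, ← isUnit_diagonal_iff hz1, ← hL.mul_right_iff, hfac,
    hU.mul_left_iff]

theorem isUnit_one_sub_smul_of_isIdempotentElem {e : A} (he : IsIdempotentElem e) {t : ℂ}
    (ht : t ≠ 1) : IsUnit (1 - t • e) := by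
  have ht' : 1 - t ≠ 0 := sub_ne_zero.2 ht.symm
  have key : t / (1 - t) - t - t * (t / (1 - t)) = 0 := by field_simp; ring
  have hz : (t / (1 - t)) • e - t • e - (t * (t / (1 - t))) • e = 0 := by
    rw [← sub_smul, ← sub_smul, key, zero_smul]
  refine ⟨⟨1 - t • e, 1 + (t / (1 - t)) • e, ?_, ?_⟩, rfl⟩
  · rw [← sub_eq_zero, ← hz]
    simp only [sub_mul, mul_add, one_mul, mul_one, smul_mul_smul_comm, he.eq]
    abel
  · rw [← sub_eq_zero, ← hz]
    simp only [add_mul, mul_sub, one_mul, mul_one, smul_mul_smul_comm, he.eq, mul_comm t]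
    abel

theorem mem_resolventSet_antitriangular_iff_mul {a b : A} (c : A) (ha : a * a = a)
    (hab : a * b = b) {z : ℂ} (hz : z ≠ 0) (hz1 : z ≠ 1) :
    z ∈ resolventSet ℂ (!![a, b; c, 0] : Matrix (Fin 2) (Fin 2) A) ↔
      z ^ 2 - z ∈ resolventSet ℂ (b * c) := by
  have hu : IsUnit (1 - z⁻¹ • (1 - a)) :=
    isUnit_one_sub_smul_of_isIdempotentElem (IsIdempotentElem.one_sub ha)
      (fun h => hz1 (inv_eq_one.1 h))
  have hfac : algebraMap ℂ A (z ^ 2 - z) - b * c =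
      (1 - z⁻¹ • (1 - a)) * ((z ^ 2) • (1 : A) - z • a - b * c) := by
    have h1 : (1 - a) * ((z ^ 2) • (1 : A) - z • a - b * c) = z ^ 2 • (1 - a) := by
      simp only [sub_mul, mul_sub, one_mul, mul_smul_comm, mul_one, ha, ← mul_assoc, hab, smul_sub]
      abel
    rw [sub_mul, one_mul, smul_mul_assoc, h1, smul_smul, pow_two, inv_mul_cancel_left₀ hz,
      Algebra.algebraMap_eq_smul_one, sub_smul, smul_sub]
    abel
  rw [mem_resolventSet_antitriangular_iff a b c hz, spectrum.mem_resolventSet_iff, hfac,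
    hu.mul_left_iff]

end Algebraic

theorem exists_sq_sub_self_eq_and_norm_sq_le (w : ℂ) :
    ∃ z : ℂ, z ^ 2 - z = w ∧ ‖z‖ ^ 2 ≤ ‖w‖ := by
  obtain ⟨z, hz⟩ : ∃ z : ℂ, z ^ 2 - z = w := by
    obtain ⟨t, ht⟩ := IsAlgClosed.exists_pow_nat_eq (1 + 4 * w) two_pos
    exact ⟨(1 + t) / 2, by linear_combination ht / 4⟩
  have hprod : ‖z‖ * ‖1 - z‖ = ‖w‖ := by
    rw [← norm_mul, ← norm_neg, ← hz]
    congr 1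
    ring
  rcases le_total ‖z‖ ‖1 - z‖ with hle | hle
  · exact ⟨z, hz, by nlinarith [norm_nonneg z]⟩
  · exact ⟨1 - z, by rw [← hz]; ring, by nlinarith [norm_nonneg (1 - z)]⟩

theorem stmt13 {A : Type*} [NormedRing A] [NormedAlgebra ℂ A] [CompleteSpace A]
    (a b c : A) (ha : a * a = a) (hab : a * b = b) :
    HasGDrazin (!![a, b; c, 0] : Matrix (Fin 2) (Fin 2) A) ↔ HasGDrazin (b * c) := by
  let _ : NormedRing (Matrix (Fin 2) (Fin 2) A) := Matrix.linftyOpNormedRing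
  let _ : NormedAlgebra ℂ (Matrix (Fin 2) (Fin 2) A) := Matrix.linftyOpNormedAlgebra
  have hcomplete : CompleteSpace (Fin 2 → Fin 2 → A) := inferInstance
  refine (@hasGDrazin_iff (Matrix (Fin 2) (Fin 2) A) _ _ hcomplete !![a, b; c, 0]).trans
    (Iff.trans ?_ hasGDrazin_iff.symm)
  constructor
  · rintro ⟨R, hR, h⟩
    refine ⟨min R 1 ^ 2, by positivity, fun w hw hwR => ?_⟩
    obtain ⟨z, rfl, hz⟩ := exists_sq_sub_self_eq_and_norm_sq_le w
    have hzR : ‖z‖ < min R 1 := lt_of_pow_lt_pow_left₀ 2 (by positivity) (hz.trans_lt hwR)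
    have hz0 : z ≠ 0 := by rintro rfl; simp at hw
    have hz1 : z ≠ 1 := by rintro rfl; simp at hw
    exact (mem_resolventSet_antitriangular_iff_mul c ha hab hz0 hz1).1
      (h z hz0 (hzR.trans_le (min_le_left _ _)))
  · rintro ⟨R, hR, h⟩
    refine ⟨min (R / 2) 1, by positivity, fun z hz hzR => ?_⟩
    have hzR' := lt_min_iff.1 hzR
    have hz1 : z ≠ 1 := by rintro rfl; simp at hzR'
    rw [mem_resolventSet_antitriangular_iff_mul c ha hab hz hz1]
    have hfac : z ^ 2 - z = z * (z - 1) := by ring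
    refine h _ (hfac ▸ mul_ne_zero hz (sub_ne_zero.2 hz1)) ?_
    have h2 : ‖z - 1‖ ≤ 2 := (norm_sub_le z 1).trans (by rw [norm_one]; linarith)
    rw [hfac, norm_mul]
    nlinarith [norm_nonneg z]
end

section
/- Let A be a complex unital Banach algebra, a, b ∈ A with a² = a. Then M = [[a,a],[b,0]] has g-Drazin inverse in M₂(A) if and only if ab has g-Drazin inverse in A. -/
open Filter Finset

theorem quasinilpotent_iff_s14 {A : Type*} [Ring A] [Algebra ℂ A] {q : A} :
    Quasinilpotent q ↔ ∀ k ∈ spectrum ℂ q, k = 0 := by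
  simp [Quasinilpotent, spectralRadius]

theorem quasinilpotent_mul_comm {A : Type*} [Ring A] [Algebra ℂ A] {x y : A}
    (h : Quasinilpotent (x * y)) : Quasinilpotent (y * x) := by
  rw [quasinilpotent_iff_s14] at h ⊢
  intro k hk
  by_contra hk0
  have hmem : k ∈ spectrum ℂ (x * y) \ {0} := by
    rw [spectrum.nonzero_mul_comm]
    exact ⟨hk, hk0⟩
  exact hk0 (h k hmem.1)

theorem Quasinilpotent.neg_s14 {A : Type*} [Ring A] [Algebra ℂ A] {q : A}
    (h : Quasinilpotent q) : Quasinilpotent (-q) := by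
  rw [quasinilpotent_iff_s14] at h ⊢
  intro k hk
  rw [← spectrum.neg_eq, Set.mem_neg] at hk
  simpa using h _ hk

theorem Quasinilpotent.isUnit_one_sub {A : Type*} [Ring A] [Algebra ℂ A] {q : A}
    (h : Quasinilpotent q) : IsUnit (1 - q) := by
  by_contra hq
  refine one_ne_zero (quasinilpotent_iff_s14.1 h 1 ?_)
  rw [spectrum.mem_iff, map_one]
  exact hq

/-- Cline's formula. -/
theorem HasGDrazin.mul_swap {A : Type*} [Ring A] [Algebra ℂ A] {x y : A}
    (h : HasGDrazin (x * y)) : HasGDrazin (y * x) := by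
  obtain ⟨d, hcomm, hd, hq⟩ := h
  have hleft : y * x * (y * d * d * x) = y * d * x := by
    calc y * x * (y * d * d * x) = y * ((x * y) * d * d) * x := by noncomm_ring
      _ = y * d * x := by rw [hcomm, ← hd]
  have hright : y * d * d * x * (y * x) = y * d * x := by
    calc y * d * d * x * (y * x) = y * (d * (d * (x * y))) * x := by noncomm_ring
      _ = y * (d * (x * y) * d) * x := by rw [mul_assoc d, hcomm]
      _ = y * d * x := by rw [← hd]
  refine ⟨y * d * d * x, hleft.trans hright.symm, ?_, ?_⟩
  · rw [hright]
    calc y * d * d * x = y * (d * (x * y) * d) * d * x := by rw [← hd]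
      _ = y * (d * ((x * y) * d)) * d * x := by noncomm_ring
      _ = y * d * x * (y * d * d * x) := by noncomm_ring
  · have hrem : y * x - (y * x) ^ 2 * (y * d * d * x) = y * ((1 - x * y * d) * x) := by
      rw [pow_two, mul_assoc (y * x) (y * x), hleft]
      noncomm_ring
    rw [hrem]
    apply quasinilpotent_mul_comm
    convert hq using 1
    calc (1 - x * y * d) * x * y = x * y - x * y * (d * (x * y)) := by noncomm_ring
      _ = _ := by rw [← hcomm]; noncomm_ring

theorem hasGDrazin_mul_comm_iff {A : Type*} [Ring A] [Algebra ℂ A] (x y : A) :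
    HasGDrazin (x * y) ↔ HasGDrazin (y * x) :=
  ⟨HasGDrazin.mul_swap, HasGDrazin.mul_swap⟩

theorem HasGDrazin.neg_s14 {A : Type*} [Ring A] [Algebra ℂ A] {x : A}
    (h : HasGDrazin x) : HasGDrazin (-x) := by
  obtain ⟨d, hcomm, hd, hq⟩ := h
  refine ⟨-d, by simpa using hcomm, ?_, ?_⟩
  · simpa using hd
  · convert hq.neg_s14 using 1
    noncomm_ring

universe u

/-- Pairwise commuting elements of a ring lie in the range of a commutative ring. -/
theorem exists_commRing_hom {R : Type u} [Ring R] (s : Set R)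
    (hs : ∀ x ∈ s, ∀ y ∈ s, x * y = y * x) :
    ∃ (C : Type u) (_ : CommRing C) (φ : C →+* R), Function.Injective φ ∧
      ∀ x ∈ s, ∃ X, φ X = x := by
  have hcomm := Subring.isMulCommutative_closure hs
  exact ⟨Subring.closure s, { mul_comm := hcomm.is_comm.comm }, (Subring.closure s).subtype,
    Subtype.val_injective, fun x hx => ⟨⟨x, Subring.subset_closure hx⟩, rfl⟩⟩

section Banach

variable {A : Type*} [NormedRing A] [NormedAlgebra ℂ A] [CompleteSpace A]

theorem Quasinilpotent.summable_norm_pow_mul_pow {q : A} (h : Quasinilpotent q) (C : ℝ) :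
    Summable fun n : ℕ => ‖q ^ n‖ * C ^ n := by
  have hlim := spectrum.pow_norm_pow_one_div_tendsto_nhds_spectralRadius q
  rw [show spectralRadius ℂ q = 0 from h] at hlim
  set ε : ℝ := 1 / (2 * (|C| + 1)) with hε
  have hεpos : 0 < ε := by positivity
  have hev := hlim.eventually_lt_const (ENNReal.ofReal_pos.2 hεpos)
  refine Summable.of_norm_bounded_eventually_nat
    (summable_geometric_of_lt_one (r := (1 / 2 : ℝ)) (by norm_num) (by norm_num)) ?_
  filter_upwards [hev, eventually_gt_atTop 0] with n hn hn0
  have hroot : ‖q ^ n‖ ^ (1 / n : ℝ) < ε := (ENNReal.ofReal_lt_ofReal_iff hεpos).1 hn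
  have hpow : ‖q ^ n‖ ≤ ε ^ n := by
    calc ‖q ^ n‖ = (‖q ^ n‖ ^ (1 / n : ℝ)) ^ n := by
          rw [one_div, Real.rpow_inv_natCast_pow (norm_nonneg _) hn0.ne']
      _ ≤ ε ^ n := by gcongr
  have hC : ε * |C| ≤ 1 / 2 := by
    rw [hε, div_mul_eq_mul_div, one_mul, div_le_div_iff₀ (by positivity) (by norm_num)]
    linarith
  calc ‖‖q ^ n‖ * C ^ n‖ = ‖q ^ n‖ * |C| ^ n := by simp
    _ ≤ ε ^ n * |C| ^ n := by gcongr
    _ = (ε * |C|) ^ n := (mul_pow _ _ _).symm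
    _ ≤ (1 / 2) ^ n := by gcongr

theorem Quasinilpotent.mul_right {q c : A} (h : Quasinilpotent q) (hc : Commute q c) :
    Quasinilpotent (q * c) := by
  rw [quasinilpotent_iff_s14]
  intro k hk
  by_contra hk0
  rw [spectrum.mem_iff] at hk
  apply hk
  set z : A := q * (k⁻¹ • c) with hz
  have hsum : Summable fun n : ℕ => z ^ n := by
    refine Summable.of_norm_bounded_eventually_nat
      (h.summable_norm_pow_mul_pow ‖k⁻¹ • c‖) ?_
    filter_upwards [eventually_gt_atTop 0] with n hn
    rw [hz, (hc.smul_right _).mul_pow]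
    exact (norm_mul_le _ _).trans (by gcongr; exact norm_pow_le' _ hn)
  have hunit : IsUnit (1 - z) :=
    isUnit_iff_exists.2 ⟨_, hsum.one_sub_mul_tsum_pow, hsum.tsum_pow_mul_one_sub⟩
  have heq : algebraMap ℂ A k - q * c = algebraMap ℂ A k * (1 - z) := by
    rw [mul_sub, mul_one, hz, mul_smul_comm, Algebra.algebraMap_eq_smul_one, smul_one_mul,
      smul_smul, mul_inv_cancel₀ hk0, one_smul]
  rw [heq]
  exact ((IsUnit.mk0 k hk0).map (algebraMap ℂ A)).mul hunit

theorem Quasinilpotent.add_s14 {x y : A} (hx : Quasinilpotent x) (hy : Quasinilpotent y)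
    (hxy : Commute x y) : Quasinilpotent (x + y) := by
  rw [quasinilpotent_iff_s14]
  intro k hk
  by_contra hk0
  rw [spectrum.mem_iff] at hk
  apply hk
  have hunit : IsUnit (algebraMap ℂ A k - x) := by
    by_contra hx'
    exact hk0 (quasinilpotent_iff_s14.1 hx k hx')
  obtain ⟨u, hu⟩ := hunit
  have hyu : Commute y (u : A) := by
    rw [hu]
    exact (Algebra.commute_algebraMap_right k y).sub_right hxy.symm
  have heq : algebraMap ℂ A k - (x + y) = (1 - y * (↑u⁻¹ : A)) * u := by
    rw [sub_mul, mul_assoc, Units.inv_mul, hu]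
    noncomm_ring
  rw [heq]
  exact (hy.mul_right hyu.units_inv_right).isUnit_one_sub.mul u.isUnit

/-- The powers of a quasinilpotent `q` decay superexponentially, so an estimate
`‖v‖ ≤ ‖q ^ n‖ * D ^ n * C` for all positive `n` forces `v = 0`. -/
theorem Quasinilpotent.eq_zero_of_norm_le {q v : A} (h : Quasinilpotent q) (C D : ℝ)
    (hv : ∀ n : ℕ, 0 < n → ‖v‖ ≤ ‖q ^ n‖ * D ^ n * C) : v = 0 := by
  have hlim := (h.summable_norm_pow_mul_pow D).tendsto_atTop_zero.mul_const C
  rw [zero_mul] at hlim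
  refine norm_le_zero_iff.1 (ge_of_tendsto hlim ?_)
  filter_upwards [eventually_gt_atTop 0] with n hn using hv n hn

/-- A generalized Drazin inverse of `x` commutes with everything that commutes with `x`. -/
theorem commute_gDrazin {x d z : A} (hcomm : x * d = d * x) (hd : d = d * x * d)
    (hq : Quasinilpotent (x - x ^ 2 * d)) (hz : Commute z x) : Commute z d := by
  set e : A := 1 - x * d with he
  set q : A := x - x ^ 2 * d with hqdef
  have hxd : Commute x d := hcomm
  have hidem : x * d * (x * d) = x * d := by
    calc x * d * (x * d) = x * (d * x * d) := by noncomm_ring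
      _ = x * d := by rw [← hd]
  have hee : IsIdempotentElem e := IsIdempotentElem.one_sub hidem
  have hqe : q = x * e := by rw [hqdef, he]; noncomm_ring
  have hxe : Commute x e :=
    (Commute.one_right x).sub_right ((Commute.refl x).mul_right hxd)
  have hqpow (n : ℕ) (hn : 0 < n) : q ^ n = x ^ n * e := by
    rw [hqe, hxe.mul_pow, hee.pow_eq hn.ne']
  have hxdpow (n : ℕ) (hn : 0 < n) : x ^ n * d ^ n = x * d := by
    rw [← hxd.mul_pow, IsIdempotentElem.pow_eq hidem hn.ne']
  have hleft : e * z * (x * d) = 0 := by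
    refine hq.eq_zero_of_norm_le ‖z‖ ‖d‖ fun n hn => ?_
    have : e * z * (x * d) = q ^ n * z * d ^ n := by
      rw [hqpow n hn, ← hxdpow n hn, (hxe.pow_left n).eq, mul_assoc e (x ^ n),
        (hz.pow_right n).symm.eq]
      noncomm_ring
    rw [this]
    calc ‖q ^ n * z * d ^ n‖ ≤ ‖q ^ n‖ * ‖z‖ * ‖d‖ ^ n :=
          (norm_mul_le _ _).trans
            (mul_le_mul (norm_mul_le _ _) (norm_pow_le' _ hn) (norm_nonneg _) (by positivity))
      _ = ‖q ^ n‖ * ‖d‖ ^ n * ‖z‖ := by ring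
  have hright : x * d * z * e = 0 := by
    refine hq.eq_zero_of_norm_le ‖z‖ ‖d‖ fun n hn => ?_
    have : x * d * z * e = d ^ n * z * q ^ n := by
      rw [hqpow n hn, ← hxdpow n hn, (hxd.pow_pow n n).eq, mul_assoc (d ^ n) (x ^ n) z,
        (hz.pow_right n).symm.eq]
      noncomm_ring
    rw [this]
    calc ‖d ^ n * z * q ^ n‖ ≤ ‖d‖ ^ n * ‖z‖ * ‖q ^ n‖ :=
          (norm_mul_le _ _).trans (mul_le_mul_of_nonneg_right ((norm_mul_le _ _).trans
            (mul_le_mul_of_nonneg_right (norm_pow_le' _ hn) (norm_nonneg _))) (norm_nonneg _))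
      _ = ‖q ^ n‖ * ‖d‖ ^ n * ‖z‖ := by ring
  have hzp : z * (x * d) = x * d * z * (x * d) := by
    rw [he, sub_mul, sub_mul, one_mul, sub_eq_zero] at hleft
    exact hleft
  have hpz : x * d * z = x * d * z * (x * d) := by
    rw [he, mul_sub, mul_one, sub_eq_zero] at hright
    exact hright
  have hswap : z * (x * d) = x * d * z := hzp.trans hpz.symm
  have hdx : x * d * d = d := by rw [hcomm, ← hd]
  have hdx' : d * (x * d) = d := by rw [← mul_assoc, ← hd]
  calc z * d = z * (x * d) * d := by rw [mul_assoc, hdx]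
    _ = d * (x * z) * d := by rw [hswap, hcomm]; noncomm_ring
    _ = d * (z * (x * d)) := by rw [← hz.eq]; noncomm_ring
    _ = d * (x * d) * z := by rw [hswap]; noncomm_ring
    _ = d * z := by rw [hdx']

theorem HasGDrazin.mul {x y : A} (hx : HasGDrazin x) (hy : HasGDrazin y) (hxy : Commute x y) :
    HasGDrazin (x * y) := by
  obtain ⟨d, hxd, hd, hqx⟩ := hx
  obtain ⟨d', hyd', hd', hqy⟩ := hy
  have hyd : Commute y d := commute_gDrazin hxd hd hqx hxy.symm
  have hxd' : Commute x d' := commute_gDrazin hyd' hd' hqy hxy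
  have hdd' : Commute d d' := commute_gDrazin hyd' hd' hqy hyd.symm
  obtain ⟨C, _, φ, -, hφ⟩ := exists_commRing_hom {x, y, d, d'} (by
    simp only [Set.mem_insert_iff, Set.mem_singleton_iff]
    rintro _ (rfl | rfl | rfl | rfl) _ (rfl | rfl | rfl | rfl) <;>
      first | rfl | assumption | (symm; assumption))
  obtain ⟨X, rfl⟩ := hφ x (by simp)
  obtain ⟨Y, rfl⟩ := hφ y (by simp)
  obtain ⟨D, rfl⟩ := hφ d (by simp)
  obtain ⟨D', rfl⟩ := hφ d' (by simp)
  have hcomm (S T : C) : Commute (φ S) (φ T) := (Commute.all S T).map φ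
  refine ⟨φ (D * D'), ?_, ?_, ?_⟩
  · rw [← map_mul]
    exact hcomm _ _
  · calc φ (D * D') = φ D * φ X * φ D * (φ D' * φ Y * φ D') := by rw [← hd, ← hd', map_mul]
      _ = φ (D * D') * (φ X * φ Y) * φ (D * D') := by
        simp only [← map_mul]
        congr 1
        ring
  · have hX : φ X - φ X ^ 2 * φ D = φ (X - X ^ 2 * D) := by simp
    have hY : φ Y - φ Y ^ 2 * φ D' = φ (Y - Y ^ 2 * D') := by simp
    rw [hX] at hqx
    rw [hY] at hqy
    convert (hqx.mul_right (hcomm _ Y)).add_s14 (hqy.mul_right (hcomm _ (X ^ 2 * D)))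
      (by simp only [← map_mul]; exact hcomm _ _) using 1
    simp only [← map_mul, ← map_pow, ← map_sub, ← map_add]
    congr 1
    ring

theorem catalan_le_four_pow (n : ℕ) : catalan n ≤ 4 ^ n := by
  calc catalan n ≤ (n + 1) * catalan n := Nat.le_mul_of_pos_left _ n.succ_pos
    _ = n.centralBinom := succ_mul_catalan_eq_centralBinom n
    _ ≤ 4 ^ n := n.centralBinom_le_four_pow

/-- The Catalan generating function converges at a quasinilpotent element and satisfies its
quadratic equation there. -/
theorem Quasinilpotent.exists_catalan_series {q : A} (h : Quasinilpotent q) :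
    ∃ c : A, c = 1 + q * (c * c) ∧ ∀ z, Commute z q → Commute z c := by
  set g : ℕ → A := fun n => catalan n • q ^ n with hg
  have hsum : Summable fun n => ‖g n‖ := by
    refine (h.summable_norm_pow_mul_pow 4).of_nonneg_of_le (fun _ => norm_nonneg _) fun n => ?_
    have hcat : (catalan n : ℝ) ≤ 4 ^ n := by exact_mod_cast catalan_le_four_pow n
    calc ‖g n‖ ≤ catalan n * ‖q ^ n‖ := norm_nsmul_le
      _ ≤ 4 ^ n * ‖q ^ n‖ := by gcongr
      _ = ‖q ^ n‖ * 4 ^ n := mul_comm _ _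
  refine ⟨∑' n, g n, ?_, fun z hz => Commute.tsum_right _ fun n =>
    (hz.pow_right n).smul_right _⟩
  rw [tsum_mul_tsum_eq_tsum_sum_antidiagonal_of_summable_norm hsum hsum,
    hsum.of_norm.tsum_eq_zero_add,
    ← (summable_norm_sum_mul_antidiagonal_of_summable_norm hsum hsum).of_norm.tsum_mul_left]
  congr 1
  · simp [hg]
  · refine tsum_congr fun n => ?_
    simp only [hg]
    rw [catalan_succ', Finset.sum_smul, Finset.mul_sum]
    refine Finset.sum_congr rfl fun ij hij => ?_
    rw [← Finset.HasAntidiagonal.mem_antidiagonal.1 hij, smul_mul_smul_comm, mul_smul_comm,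
      ← pow_add, ← pow_succ']

/-- An explicit generalized Drazin inverse, up to the quasinilpotence of the remainder, of a root
`n` of `n ^ 2 - n = p` in terms of one of `p`. Here `r` is the small root of `r ^ 2 - r = q` and
`f` the idempotent splitting off the part of `n` near `1` when `p` is nearly zero. -/
theorem exists_gDrazin_of_sq_sub_self {C : Type*} [CommRing C] {n p d q c r s t : C}
    (hp : n * n - n = p) (hd : d = d * p * d) (hq : p - p ^ 2 * d = q)
    (hc : c = 1 - q * (c * c)) (hr : r = -(q * c)) (hs : (1 - 2 * r) * s = 1)
    (ht : (1 - r) * t = 1) :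
    ∃ y w : C, y = y * n * y ∧ n - n ^ 2 * y = q * w := by
  obtain ⟨e, he⟩ : ∃ e, e = 1 - p * d := ⟨_, rfl⟩
  have hee : e * e = e := by rw [he]; linear_combination -p * hd
  have hqe : q = p * e := by rw [he, ← hq]; ring
  have hde : d * e = 0 := by rw [he]; linear_combination hd
  have hre : r * e = r := by rw [hr, hqe]; linear_combination -p * c * hee
  have hrr : r * r - r = q := by rw [hr]; linear_combination q * hc
  obtain ⟨f, hf⟩ : ∃ f, f = (n * e - r) * s := ⟨_, rfl⟩
  have hroot : (n * e - r) * (n * e - r) = (n * e - r) * (1 - 2 * r) := by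
    have : n * n * e - n * e = q := by rw [hqe, ← hp]; ring
    linear_combination this - hrr + n * n * hee
  have hff : f * f = f := by
    rw [hf]; linear_combination s * s * hroot + (n * e - r) * s * hs
  have hfe : f * e = f := by rw [hf]; linear_combination s * n * hee - s * hre
  have hfs : (1 - 2 * r) * f = n * e - r := by rw [hf]; linear_combination (n * e - r) * hs
  have hnf : n * f = (1 - r) * f := by
    have : (n * e - r) * f = (1 - 2 * r) * f := by
      rw [hf]; linear_combination s * hroot
    linear_combination this - n * hfe
  have hdf : d * f = 0 := by linear_combination f * hde - d * hfe
  have hny : n * (f * t + (n - 1) * d) = f + (1 - e) := by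
    rw [he]; linear_combination t * hnf + f * ht + d * hp
  refine ⟨f * t + (n - 1) * d, -(c * (1 - f)), ?_, ?_⟩
  · have : (f * t + (n - 1) * d) * (f + (1 - e)) = f * t + (n - 1) * d := by
      linear_combination t * hff - t * hfe + (n - 1) * hdf - (n - 1) * hde
    rw [mul_assoc _ n, hny, this]
  · have : n ^ 2 * (f * t + (n - 1) * d) = n * (f + (1 - e)) := by rw [← hny]; ring
    rw [this]
    linear_combination -hnf - hfs + (1 - f) * hr

theorem HasGDrazin.of_mul_self_sub_self {n : A} (h : HasGDrazin (n * n - n)) : HasGDrazin n := by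
  obtain ⟨d, hpd, hd, hq⟩ := h
  set p : A := n * n - n with hp
  have hnp : Commute n p := ((Commute.refl n).mul_right (Commute.refl n)).sub_right (Commute.refl n)
  have hnd : Commute n d := commute_gDrazin hpd hd hq hnp
  set q : A := p - p ^ 2 * d with hqdef
  have hnq : Commute n q := hnp.sub_right ((hnp.pow_right 2).mul_right hnd)
  have hdq : Commute d q := by
    have hdp : Commute d p := hpd.symm
    exact hdp.sub_right ((hdp.pow_right 2).mul_right (Commute.refl d))
  obtain ⟨c, hc, hcomm⟩ := hq.neg_s14.exists_catalan_series
  have hnc : Commute n c := hcomm n hnq.neg_right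
  have hdc : Commute d c := hcomm d hdq.neg_right
  have hqc : Commute q c := hcomm q (Commute.refl q).neg_right
  set r : A := -(q * c) with hr
  have hrq : Quasinilpotent r := (hq.mul_right hqc).neg_s14
  have hr2 : Quasinilpotent (2 * r) := by
    rw [← (Commute.ofNat_right r 2).eq]
    exact hrq.mul_right (Commute.ofNat_right r 2)
  obtain ⟨u, hu⟩ := hr2.isUnit_one_sub
  obtain ⟨v, hv⟩ := hrq.isUnit_one_sub
  have hr_comm {z : A} (hz : Commute z q) (hz' : Commute z c) : Commute z r :=
    (hz.mul_right hz').neg_right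
  have hu_comm {z : A} (hz : Commute z r) : Commute z (↑u⁻¹ : A) := by
    refine Commute.units_inv_right ?_
    rw [hu]
    exact (Commute.one_right z).sub_right ((Commute.ofNat_right z 2).mul_right hz)
  have hv_comm {z : A} (hz : Commute z r) : Commute z (↑v⁻¹ : A) := by
    refine Commute.units_inv_right ?_
    rw [hv]
    exact (Commute.one_right z).sub_right hz
  have hnr : Commute n r := hr_comm hnq hnc
  have hdr : Commute d r := hr_comm hdq hdc
  have hcr : Commute c r := hr_comm hqc.symm (Commute.refl c)
  have hnu := hu_comm hnr
  have hdu := hu_comm hdr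
  have hcu := hu_comm hcr
  have hnv := hv_comm hnr
  have hdv := hv_comm hdr
  have hcv := hv_comm hcr
  have huv := hv_comm (hu_comm (Commute.refl r)).symm
  obtain ⟨C, _, φ, hinj, hφ⟩ := exists_commRing_hom {n, d, c, (↑u⁻¹ : A), (↑v⁻¹ : A)} (by
    simp only [Set.mem_insert_iff, Set.mem_singleton_iff]
    rintro _ (rfl | rfl | rfl | rfl | rfl) _ (rfl | rfl | rfl | rfl | rfl) <;>
      first | rfl | assumption | (symm; assumption))
  obtain ⟨N, rfl⟩ := hφ n (by simp)
  obtain ⟨D, rfl⟩ := hφ d (by simp)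
  obtain ⟨K, rfl⟩ := hφ c (by simp)
  obtain ⟨S, hS⟩ := hφ (↑u⁻¹ : A) (by simp)
  obtain ⟨T, hT⟩ := hφ (↑v⁻¹ : A) (by simp)
  obtain ⟨P, hP⟩ : ∃ P, P = N * N - N := ⟨_, rfl⟩
  obtain ⟨Q, hQ⟩ : ∃ Q, Q = P - P ^ 2 * D := ⟨_, rfl⟩
  obtain ⟨R, hR⟩ : ∃ R, R = -(Q * K) := ⟨_, rfl⟩
  have hφP : φ P = p := by simp [hP, hp]
  have hφQ : φ Q = q := by simp [hQ, hqdef, hφP]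
  have hφR : φ R = r := by simp [hR, hr, hφQ]
  obtain ⟨y, w, hy, hw⟩ := exists_gDrazin_of_sq_sub_self (s := S) (t := T) hP.symm
    (hinj (by simpa [hφP] using hd)) hQ.symm
    (hinj (by simpa [hφQ, sub_eq_add_neg] using hc)) hR
    (hinj (by simp [hφR, hS, ← hu, map_ofNat φ 2])) (hinj (by simp [hφR, hT, ← hv]))
  refine ⟨φ y, ((Commute.all N y).map φ).eq, by simpa using congrArg φ hy, ?_⟩
  have hrem : φ N - φ N ^ 2 * φ y = q * φ w := by simpa [hφQ] using congrArg φ hw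
  rw [hrem, ← hφQ]
  exact (hφQ ▸ hq).mul_right ((Commute.all Q w).map φ)

end Banach

section Matrix

variable {A : Type*}

theorem isUnit_fin_two_diagonal_iff [Ring A] {x y : A} :
    IsUnit (!![x, 0; 0, y] : Matrix (Fin 2) (Fin 2) A) ↔ IsUnit x ∧ IsUnit y := by
  constructor
  · intro h
    obtain ⟨z, hxz, hzx⟩ := isUnit_iff_exists.1 h
    rw [Matrix.eta_fin_two z, Matrix.mul_fin_two, Matrix.one_fin_two] at hxz hzx
    have hxz0 := congrFun₂ hxz 0 0
    have hxz1 := congrFun₂ hxz 1 1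
    have hzx0 := congrFun₂ hzx 0 0
    have hzx1 := congrFun₂ hzx 1 1
    simp at hxz0 hxz1 hzx0 hzx1
    exact ⟨isUnit_iff_exists.2 ⟨_, hxz0, hzx0⟩, isUnit_iff_exists.2 ⟨_, hxz1, hzx1⟩⟩
  · rintro ⟨⟨u, rfl⟩, ⟨v, rfl⟩⟩
    refine isUnit_iff_exists.2 ⟨!![↑u⁻¹, 0; 0, ↑v⁻¹], ?_, ?_⟩ <;>
      simp [Matrix.one_fin_two]

theorem spectrum_fin_two_diagonal [Ring A] [Algebra ℂ A] (x y : A) :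
    spectrum ℂ (!![x, 0; 0, y] : Matrix (Fin 2) (Fin 2) A) = spectrum ℂ x ∪ spectrum ℂ y := by
  ext k
  have hsub : algebraMap ℂ (Matrix (Fin 2) (Fin 2) A) k - !![x, 0; 0, y] =
      !![algebraMap ℂ A k - x, 0; 0, algebraMap ℂ A k - y] := by
    ext i j
    fin_cases i <;> fin_cases j <;> simp [Matrix.algebraMap_matrix_apply]
  rw [Set.mem_union, spectrum.mem_iff, spectrum.mem_iff, spectrum.mem_iff, hsub,
    isUnit_fin_two_diagonal_iff, not_and_or]

theorem quasinilpotent_fin_two_diagonal_iff [Ring A] [Algebra ℂ A] {x y : A} :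
    Quasinilpotent (!![x, 0; 0, y] : Matrix (Fin 2) (Fin 2) A) ↔
      Quasinilpotent x ∧ Quasinilpotent y := by
  simp only [quasinilpotent_iff_s14, spectrum_fin_two_diagonal, Set.mem_union, or_imp, forall_and]

theorem HasGDrazin.fin_two_diagonal [Ring A] [Algebra ℂ A] {x y : A} (hx : HasGDrazin x)
    (hy : HasGDrazin y) : HasGDrazin (!![x, 0; 0, y] : Matrix (Fin 2) (Fin 2) A) := by
  obtain ⟨d, hcomm, hd, hq⟩ := hx
  obtain ⟨d', hcomm', hd', hq'⟩ := hy
  refine ⟨!![d, 0; 0, d'], ?_, ?_, ?_⟩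
  · simp [hcomm, hcomm']
  · simp [← hd, ← hd']
  · convert quasinilpotent_fin_two_diagonal_iff.2 ⟨hq, hq'⟩ using 1
    ext i j
    fin_cases i <;> fin_cases j <;> simp [pow_two]

attribute [local instance] Matrix.linftyOpNormedRing Matrix.linftyOpNormedAlgebra

theorem completeSpace_matrix_linftyOp {n : Type*} [Fintype n] [DecidableEq n] [NormedRing A]
    [CompleteSpace A] :
    @CompleteSpace (Matrix n n A)
      (Matrix.linftyOpNormedRing (n := n) (α := A)).toPseudoMetricSpace.toUniformSpace :=
  inferInstanceAs (CompleteSpace (n → n → A))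

attribute [local instance] completeSpace_matrix_linftyOp

variable [NormedRing A] [NormedAlgebra ℂ A] [CompleteSpace A]

theorem HasGDrazin.of_fin_two_diagonal {x y : A}
    (h : HasGDrazin (!![x, 0; 0, y] : Matrix (Fin 2) (Fin 2) A)) : HasGDrazin x := by
  obtain ⟨d, hcomm, hd, hq⟩ := h
  have hproj : Commute (!![1, 0; 0, 0] : Matrix (Fin 2) (Fin 2) A) !![x, 0; 0, y] := by
    ext i j
    fin_cases i <;> fin_cases j <;> simp
  have hdproj := (commute_gDrazin hcomm hd hq hproj).eq
  rw [Matrix.eta_fin_two d, Matrix.mul_fin_two, Matrix.mul_fin_two] at hdproj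
  have h01 : d 0 1 = 0 := by simpa using congrFun₂ hdproj 0 1
  have h10 : d 1 0 = 0 := by simpa using (congrFun₂ hdproj 1 0).symm
  have hdiag : d = !![d 0 0, 0; 0, d 1 1] := by
    conv_lhs => rw [Matrix.eta_fin_two d, h01, h10]
  rw [hdiag] at hcomm hd hq
  refine ⟨d 0 0, ?_, ?_, ?_⟩
  · simpa using congrFun₂ hcomm 0 0
  · simpa using congrFun₂ hd 0 0
  · refine (quasinilpotent_fin_two_diagonal_iff (y := y - y ^ 2 * d 1 1)).1 ?_ |>.1
    convert hq using 1
    ext i j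
    fin_cases i <;> fin_cases j <;> simp [pow_two]

/-- The companion-type matrix `[[a, p], [a, 0]]` over the corner ring of an idempotent `a`. -/
theorem hasGDrazin_corner_companion_iff {a p : A} (ha : a * a = a) (hap : a * p = p)
    (hpa : p * a = p) :
    HasGDrazin (!![a, p; a, 0] : Matrix (Fin 2) (Fin 2) A) ↔ HasGDrazin p := by
  have hsq : (!![a, p; a, 0] : Matrix (Fin 2) (Fin 2) A) * !![a, p; a, 0] - !![a, p; a, 0] =
      !![p, 0; 0, p] := by
    ext i j
    fin_cases i <;> fin_cases j <;> simp [ha, hap, hpa]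
  constructor
  · intro h
    have hconj : HasGDrazin (!![0, -p; -a, a] : Matrix (Fin 2) (Fin 2) A) := by
      have hS : (!![1, -1; 0, -1] : Matrix (Fin 2) (Fin 2) A) * !![1, -1; 0, -1] = 1 := by
        simp [Matrix.one_fin_two]
      have h' : HasGDrazin ((!![a, p; a, 0] * !![1, -1; 0, -1]) *
          (!![1, -1; 0, -1] : Matrix (Fin 2) (Fin 2) A)) := by
        rwa [mul_assoc, hS, mul_one]
      convert h'.mul_swap using 1
      simp
    have hmul : (!![a, p; a, 0] : Matrix (Fin 2) (Fin 2) A) * !![0, -p; -a, a] =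
        -!![p, 0; 0, p] := by
      ext i j
      fin_cases i <;> fin_cases j <;> simp [hap, hpa]
    have hcomm : Commute (!![a, p; a, 0] : Matrix (Fin 2) (Fin 2) A) !![0, -p; -a, a] := by
      simp [Commute, SemiconjBy, ha, hap, hpa]
    have hprod := (h.mul hconj hcomm).neg_s14
    rw [hmul, neg_neg] at hprod
    exact hprod.of_fin_two_diagonal
  · intro h
    apply HasGDrazin.of_mul_self_sub_self
    rw [hsq]
    exact h.fin_two_diagonal h

end Matrix

theorem stmt14 {A : Type*} [NormedRing A] [NormedAlgebra ℂ A] [CompleteSpace A]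
    (a b : A) (ha : a * a = a) :
    HasGDrazin (!![a, a; b, 0] : Matrix (Fin 2) (Fin 2) A) ↔ HasGDrazin (a * b) := by
  have haab : a * (a * b) = a * b := by rw [← mul_assoc, ha]
  have hM : (!![a, a; b, 0] : Matrix (Fin 2) (Fin 2) A) = !![a, 0; 0, b] * !![a, a; 1, 0] := by
    simp [ha]
  have hswap : (!![a, a; 1, 0] * !![a, 0; 0, b] : Matrix (Fin 2) (Fin 2) A) =
      !![a, 0; 0, a] * !![a, a * b; a, 0] := by
    simp [ha, haab]
  have hcorner : (!![a, a * b; a, 0] * !![a, 0; 0, a] : Matrix (Fin 2) (Fin 2) A) =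
      !![a, a * b * a; a, 0] := by
    simp [ha]
  rw [hM, hasGDrazin_mul_comm_iff, hswap, hasGDrazin_mul_comm_iff, hcorner,
    hasGDrazin_corner_companion_iff ha (by rw [← mul_assoc, haab]) (by rw [mul_assoc _ a, ha]),
    hasGDrazin_mul_comm_iff, haab]
end
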